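/- arXiv:2511.21418 — 2 statements merged into one kernel-verified Lean document; each statement's English description precedes it below -/
import Mathlib

section
/- There is an absolute constant C > 0 such that the following holds. Let n ≥ 2 be an integer, ε ∈ (0, 1/2), λ = 2·ln(1/ε) with λ ≤ n·ln(10/9), and R = ⌊log₂(ln(10/9)·n/λ)⌋. Let X ⊂ [−1,1]∖{0} be a finite set with positive weights (a_x)_{x∈X}, let B_0, …, B_{R+1} be the buckets of X with bucket weights w_0, …, w_{R+1}, and let H = V_X D_X V_X^T ∈ ℝ^{n×n}. Then there exists a Hankel matrix Ĥ ∈ ℝ^{n×n} of rank at most C·(ln n)·ln(1/ε) such that ‖H − Ĥ‖₂ ≤ ε · max_{0≤r≤R+1} w_r · n/2^r, and ‖H − Ĥ‖_F ≤ ε · ( √( Σ_{r₁=0}^{R} Σ_{r₂=0}^{R} w_{r₁} w_{r₂} · (n/2^{max(r₁,r₂)})² ) + w_{R+1} ). -/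
open scoped BigOperators

/-- A matrix is Hankel if its entries depend only on the sum of the indices. -/
def IsHankel {n : ℕ} (A : Matrix (Fin n) (Fin n) ℝ) : Prop :=
  ∀ i j k l : Fin n, (i : ℕ) + (j : ℕ) = (k : ℕ) + (l : ℕ) → A i j = A k l

/-- Euclidean (ℓ₂) norm of a vector. -/
noncomputable def euclNorm {n : ℕ} (x : Fin n → ℝ) : ℝ := Real.sqrt (∑ i, x i ^ 2)

/-- Spectral norm of a matrix: supremum of ‖Ax‖₂ over the Euclidean unit ball. -/
noncomputable def specNorm {n : ℕ} (A : Matrix (Fin n) (Fin n) ℝ) : ℝ :=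
  ⨆ x : {x : Fin n → ℝ // euclNorm x ≤ 1}, euclNorm (A.mulVec x.1)

/-- Frobenius norm of a matrix. -/
noncomputable def froNorm {n : ℕ} (A : Matrix (Fin n) (Fin n) ℝ) : ℝ :=
  Real.sqrt (∑ i, ∑ j, (A i j) ^ 2)

/-- The Vandermonde matrix `V_X ∈ ℝ^{n×|X|}` whose columns are the moment vectors
`v_n(x) = (1, x, …, x^{n−1})ᵀ` for `x ∈ X`. -/
noncomputable def vandermondeX (n : ℕ) (X : Finset ℝ) : Matrix (Fin n) X ℝ :=
  Matrix.of fun (i : Fin n) (x : X) => (x : ℝ) ^ (i : ℕ)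

/-- The product `V_X D_X V_Xᵀ` where `D_X = diag((a_x)_{x∈X})`. -/
noncomputable def vdvT (n : ℕ) (X : Finset ℝ) (a : ℝ → ℝ) : Matrix (Fin n) (Fin n) ℝ :=
  vandermondeX n X * Matrix.diagonal (fun x : X => a (x : ℝ)) * (vandermondeX n X).transpose


open scoped Classical

/-- Log-scale bucketing of a set of nodes `X ⊂ [−1,1]∖{0}`:
`B₀ = {x : ln(1/|x|) ∈ [0, λ/n]}`, `B_r = {x : ln(1/|x|) ∈ (2^{r−1}λ/n, 2^r λ/n]}` for
`1 ≤ r ≤ R`, and `B_{R+1} = {x : ln(1/|x|) > 2^R λ/n}`. -/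
noncomputable def bucket (X : Finset ℝ) (lam : ℝ) (n R r : ℕ) : Finset ℝ :=
  if r = 0 then
    X.filter (fun x => 0 ≤ Real.log (1 / |x|) ∧ Real.log (1 / |x|) ≤ lam / n)
  else if r ≤ R then
    X.filter (fun x =>
      (2 : ℝ) ^ (r - 1) * lam / n < Real.log (1 / |x|) ∧
        Real.log (1 / |x|) ≤ (2 : ℝ) ^ r * lam / n)
  else
    X.filter (fun x => (2 : ℝ) ^ R * lam / n < Real.log (1 / |x|))

/-!
On a bucket of level `r` the power `x ^ s` equals, up to sign, `exp (-s * log (1 / |x|))` with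
`log (1 / |x|)` of order `2 ^ r * λ / n`. As long as `2 ^ r * s / n` is bounded, a Taylor polynomial
of degree `O(log (1 / ε))` in `log (1 / |x|)` approximates it; for larger `s` it is negligible by
itself. By Carathéodory's theorem the measure carried by the bucket can therefore be replaced by one
with `O(log (1 / ε))` of the same nodes, at the cost of an error
`2 * w_r * ε ^ 12 * exp (-(2 ^ r * s / (3 * n)))` in the `s`-th moment. In the last bucket it
suffices to match the first `O(log (1 / ε))` power moments.

Since `exp (-(c * (i + j)))` is a product, the error matrix is dominated entrywise by
`2 * ε ^ 12 * ∑ w_r • u_r u_rᵀ` with geometric vectors `u_r`, whose inner products satisfy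
`⟨u_r, u_q⟩ ≤ 6 * n / 2 ^ max r q`. Expanding the square gives the Frobenius bound, and the
Schur test with the weight vector `∑ (3 / 2) ^ q • u_q` gives the spectral bound.
-/

section HankelMatrix

variable {n : ℕ}

/-- The `s`-th moment of the discrete measure with mass `a x` at each `x ∈ S`. -/
noncomputable def powerMoment (S : Finset ℝ) (a : ℝ → ℝ) (s : ℕ) : ℝ :=
  ∑ x ∈ S, a x * x ^ s

lemma vdvT_apply (X : Finset ℝ) (a : ℝ → ℝ) (i j : Fin n) :
    vdvT n X a i j = powerMoment X a (i + j) := by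
  rw [vdvT, powerMoment, Matrix.mul_apply, ← Finset.sum_coe_sort X]
  refine Finset.sum_congr rfl fun x _ => ?_
  rw [Matrix.mul_diagonal, Matrix.transpose_apply, vandermondeX, Matrix.of_apply, Matrix.of_apply,
    pow_add]
  ring

lemma isHankel_vdvT (X : Finset ℝ) (a : ℝ → ℝ) : IsHankel (vdvT n X a) := by
  intro i j k l hijkl
  rw [vdvT_apply, vdvT_apply, hijkl]

lemma rank_vdvT_le_card (X : Finset ℝ) (a : ℝ → ℝ) : (vdvT n X a).rank ≤ X.card :=
  calc (vdvT n X a).rank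
    _ ≤ (vandermondeX n X * Matrix.diagonal fun x : X => a x).rank := Matrix.rank_mul_le_left _ _
    _ ≤ Fintype.card X := Matrix.rank_le_card_width _
    _ = X.card := Fintype.card_coe X

lemma powerMoment_biUnion {ι : Type*} (I : Finset ι) (T : ι → Finset ℝ) (b : ι → ℝ → ℝ) (s : ℕ) :
    powerMoment (I.biUnion T) (fun x => ∑ r ∈ I, if x ∈ T r then b r x else 0) s =
      ∑ r ∈ I, powerMoment (T r) (b r) s := by
  simp only [powerMoment, Finset.sum_mul, ite_mul, zero_mul]
  rw [Finset.sum_comm]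
  refine Finset.sum_congr rfl fun r hr => ?_
  rw [← Finset.sum_filter, Finset.filter_mem_eq_inter,
    Finset.inter_eq_right.mpr (Finset.subset_biUnion_of_mem T hr)]

end HankelMatrix

section MatrixNorms

variable {n : ℕ} {E P : Matrix (Fin n) (Fin n) ℝ}

lemma froNorm_eq_norm (A : Matrix (Fin n) (Fin n) ℝ) :
    froNorm A = ‖WithLp.toLp 2 fun p : Fin n × Fin n => A p.1 p.2‖ := by
  simp only [froNorm, EuclideanSpace.norm_eq, Fintype.sum_prod_type, Real.norm_eq_abs, sq_abs]

lemma froNorm_add_le (A B : Matrix (Fin n) (Fin n) ℝ) :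
    froNorm (A + B) ≤ froNorm A + froNorm B := by
  simp only [froNorm_eq_norm]
  exact norm_add_le (WithLp.toLp 2 fun p : Fin n × Fin n => A p.1 p.2)
    (WithLp.toLp 2 fun p : Fin n × Fin n => B p.1 p.2)

lemma froNorm_le_mul_of_abs_le {η : ℝ} (hη : 0 ≤ η) (hEP : ∀ i j, |E i j| ≤ η * P i j) :
    froNorm E ≤ η * froNorm P := by
  rw [froNorm, froNorm, ← Real.sqrt_mul_self hη, ← Real.sqrt_mul (mul_self_nonneg η), ← sq]
  refine Real.sqrt_le_sqrt ?_
  simp only [Finset.mul_sum, ← mul_pow]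
  refine Finset.sum_le_sum fun i _ => Finset.sum_le_sum fun j _ => ?_
  rw [← sq_abs (E i j)]
  exact pow_le_pow_left₀ (abs_nonneg _) (hEP i j) 2

lemma froNorm_sq_eq_trace (A : Matrix (Fin n) (Fin n) ℝ) :
    froNorm A ^ 2 = (A * A.transpose).trace := by
  rw [froNorm, Real.sq_sqrt (by positivity)]
  simp only [Matrix.trace, Matrix.diag_apply, Matrix.mul_apply, Matrix.transpose_apply, sq]

lemma froNorm_sum_smul_vecMulVec_sq {ι : Type*} (I : Finset ι) (α : ι → ℝ) (u : ι → Fin n → ℝ) :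
    froNorm (∑ r ∈ I, α r • Matrix.vecMulVec (u r) (u r)) ^ 2 =
      ∑ r ∈ I, ∑ q ∈ I, α r * α q * (u r ⬝ᵥ u q) ^ 2 := by
  rw [froNorm_sq_eq_trace]
  simp only [Matrix.transpose_sum, Matrix.transpose_smul, Matrix.transpose_vecMulVec,
    Finset.sum_mul_sum, smul_mul_smul_comm, Matrix.vecMulVec_mul_vecMulVec, Matrix.trace_sum,
    Matrix.trace_smul, Matrix.trace_vecMulVec, dotProduct_smul, smul_eq_mul, sq]

/-- Cauchy–Schwarz with the weights `p` splits `(∑ⱼ |Eᵢⱼ| |yⱼ|)²` into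
`(∑ⱼ Pᵢⱼ pⱼ) (∑ⱼ Pᵢⱼ yⱼ² / pⱼ)`. -/
lemma mulVec_sq_le_of_abs_le (hEP : ∀ i j, |E i j| ≤ P i j) {p : Fin n → ℝ} (hp : ∀ i, 0 < p i)
    (y : Fin n → ℝ) (i : Fin n) :
    (E.mulVec y i) ^ 2 ≤ P.mulVec p i * ∑ j, P i j * (y j ^ 2 / p j) := by
  have hP : ∀ i j, 0 ≤ P i j := fun i j => (abs_nonneg _).trans (hEP i j)
  have abs_mulVec_le : |E.mulVec y i| ≤ ∑ j, P i j * |y j| := by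
    rw [Matrix.mulVec, dotProduct]
    refine (Finset.abs_sum_le_sum_abs _ _).trans (Finset.sum_le_sum fun j _ => ?_)
    rw [abs_mul]
    gcongr
    exact hEP i j
  calc (E.mulVec y i) ^ 2 = |E.mulVec y i| ^ 2 := (sq_abs _).symm
    _ ≤ (∑ j, P i j * |y j|) ^ 2 := by gcongr
    _ ≤ (∑ j, P i j * p j) * ∑ j, P i j * (y j ^ 2 / p j) := by
      refine Finset.sum_sq_le_sum_mul_sum_of_sq_le_mul _
        (fun j _ => mul_nonneg (hP i j) (hp j).le)
        (fun j _ => mul_nonneg (hP i j) (div_nonneg (sq_nonneg _) (hp j).le)) fun j _ => le_of_eq ?_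
      have := (hp j).ne'
      rw [mul_pow, sq_abs]
      field_simp

/-- The **Schur test**. -/
lemma specNorm_le_of_mulVec_le (hEP : ∀ i j, |E i j| ≤ P i j) (hP : P.IsSymm) {p : Fin n → ℝ}
    (hp : ∀ i, 0 < p i) {K : ℝ} (hK : 0 ≤ K) (hPp : ∀ i, P.mulVec p i ≤ K * p i) :
    specNorm E ≤ K := by
  refine Real.iSup_le (fun ⟨y, hy⟩ => ?_) hK
  rw [euclNorm, Real.sqrt_le_one] at hy
  rw [euclNorm, Real.sqrt_le_iff]
  have hP0 : ∀ i j, 0 ≤ P i j := fun i j => (abs_nonneg _).trans (hEP i j)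
  refine ⟨hK, ?_⟩
  calc ∑ i, (E.mulVec y i) ^ 2
    _ ≤ ∑ i, K * p i * ∑ j, P i j * (y j ^ 2 / p j) := by
      refine Finset.sum_le_sum fun i _ => (mulVec_sq_le_of_abs_le hEP hp y i).trans ?_
      refine mul_le_mul_of_nonneg_right (hPp i) (Finset.sum_nonneg fun j _ => ?_)
      exact mul_nonneg (hP0 i j) (div_nonneg (sq_nonneg _) (hp j).le)
    _ = K * ∑ j, y j ^ 2 / p j * P.mulVec p j := by
      simp only [Matrix.mulVec, dotProduct, Finset.mul_sum]
      rw [Finset.sum_comm]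
      refine Finset.sum_congr rfl fun j _ => Finset.sum_congr rfl fun i _ => ?_
      rw [hP.apply i j]
      ring
    _ ≤ K * ∑ j, y j ^ 2 / p j * (K * p j) := by
      gcongr with j
      · exact div_nonneg (sq_nonneg _) (hp j).le
      · exact hPp j
    _ = K ^ 2 * ∑ j, y j ^ 2 := by
      simp only [Finset.mul_sum]
      refine Finset.sum_congr rfl fun j _ => ?_
      have := (hp j).ne'
      field_simp
    _ ≤ K ^ 2 := mul_le_of_le_one_right (sq_nonneg K) hy

end MatrixNorms

section DecayMatrix

lemma sum_exp_neg_mul_le (n : ℕ) {y : ℝ} (hy : 0 < y) (hy1 : y ≤ 1) :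
    ∑ i : Fin n, Real.exp (-(y * i)) ≤ 2 / y := by
  have exp_eq_pow (i : ℕ) : Real.exp (-(y * i)) = Real.exp (-y) ^ i := by
    rw [← Real.exp_nat_mul]
    ring_nf
  simp only [exp_eq_pow]
  rw [Fin.sum_univ_eq_sum_range fun i => Real.exp (-y) ^ i]
  have half_le : y / 2 ≤ 1 - Real.exp (-y) := by
    have := Real.add_one_le_exp y
    rw [Real.exp_neg, le_sub_comm, inv_le_iff_one_le_mul₀ (Real.exp_pos y)]
    nlinarith
  have sum_mul_le : (∑ i ∈ Finset.range n, Real.exp (-y) ^ i) * (1 - Real.exp (-y)) ≤ 1 := by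
    rw [geom_sum_mul_neg]
    exact sub_le_self _ (by positivity)
  rw [le_div_iff₀ hy]
  have sum_mul_half_le :=
    mul_le_mul_of_nonneg_left half_le (a := ∑ i ∈ Finset.range n, Real.exp (-y) ^ i) (by positivity)
  linarith

/-- The decay profile of bucket `r`: its moment of order `s` is compressed with an error
proportional to `exp (-(2 ^ r * s / (3 * n)))`, and `s = i + j` factors over rows and columns. -/
noncomputable def decay (n r : ℕ) (i : Fin n) : ℝ := Real.exp (-((2 : ℝ) ^ r / (3 * n) * i))

/-- The nonnegative combination `∑ α r • (decay n r) (decay n r)ᵀ` of rank-one matrices, which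
dominates the approximation error entrywise. -/
noncomputable def decayMatrix (n : ℕ) (I : Finset ℕ) (α : ℕ → ℝ) : Matrix (Fin n) (Fin n) ℝ :=
  ∑ r ∈ I, α r • Matrix.vecMulVec (decay n r) (decay n r)

variable {n : ℕ} {I : Finset ℕ} {α : ℕ → ℝ}

lemma decayMatrix_apply (i j : Fin n) :
    decayMatrix n I α i j = ∑ r ∈ I, α r * (decay n r i * decay n r j) := by
  simp only [decayMatrix, Matrix.sum_apply, Matrix.smul_apply, Matrix.vecMulVec_apply, smul_eq_mul]

lemma isSymm_decayMatrix : (decayMatrix n I α).IsSymm := by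
  ext i j
  simp only [Matrix.transpose_apply, decayMatrix_apply, mul_comm (decay n _ j)]

lemma decay_dotProduct_nonneg (r q : ℕ) : 0 ≤ decay n r ⬝ᵥ decay n q :=
  Finset.sum_nonneg fun _ _ => mul_nonneg (Real.exp_pos _).le (Real.exp_pos _).le

lemma decay_dotProduct_le {r q : ℕ} (hr : (2 : ℝ) ^ r ≤ n) (hq : (2 : ℝ) ^ q ≤ n) :
    decay n r ⬝ᵥ decay n q ≤ 6 * (n / 2 ^ max r q) := by
  have hmax : (2 : ℝ) ^ max r q ≤ n := by rcases max_choice r q with h | h <;> rwa [h]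
  have hn : (0 : ℝ) < n := lt_of_lt_of_le (by positivity) hr
  have two_pow_max_le : (2 : ℝ) ^ max r q ≤ 2 ^ r + 2 ^ q := by
    rcases max_choice r q with h | h <;> rw [h] <;> simp
  calc decay n r ⬝ᵥ decay n q
    _ ≤ ∑ i : Fin n, Real.exp (-((2 : ℝ) ^ max r q / (3 * n) * i)) := by
      refine Finset.sum_le_sum fun i _ => ?_
      rw [decay, decay, ← Real.exp_add, Real.exp_le_exp, ← neg_add, neg_le_neg_iff, ← add_mul,
        ← add_div]
      gcongr
    _ ≤ 2 / ((2 : ℝ) ^ max r q / (3 * n)) := by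
      refine sum_exp_neg_mul_le n (by positivity) ?_
      rw [div_le_one (by positivity)]
      linarith
    _ = 6 * (n / 2 ^ max r q) := by
      field_simp
      norm_num

lemma froNorm_decayMatrix_le (hI : ∀ r ∈ I, (2 : ℝ) ^ r ≤ n) (hα : ∀ r ∈ I, 0 ≤ α r) :
    froNorm (decayMatrix n I α) ≤
      6 * Real.sqrt (∑ r ∈ I, ∑ q ∈ I, α r * α q * ((n : ℝ) / 2 ^ max r q) ^ 2) := by
  have sq_le : froNorm (decayMatrix n I α) ^ 2 ≤
      6 ^ 2 * ∑ r ∈ I, ∑ q ∈ I, α r * α q * ((n : ℝ) / 2 ^ max r q) ^ 2 := by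
    rw [decayMatrix, froNorm_sum_smul_vecMulVec_sq]
    simp only [Finset.mul_sum, mul_left_comm ((6 : ℝ) ^ 2), ← mul_pow]
    gcongr with r hr q hq
    · exact mul_nonneg (hα r hr) (hα q hq)
    · exact decay_dotProduct_nonneg r q
    · exact decay_dotProduct_le (hI r hr) (hI q hq)
  calc froNorm (decayMatrix n I α)
    _ ≤ Real.sqrt (6 ^ 2 * ∑ r ∈ I, ∑ q ∈ I, α r * α q * ((n : ℝ) / 2 ^ max r q) ^ 2) :=
      Real.le_sqrt_of_sq_le sq_le
    _ = _ := by rw [Real.sqrt_mul (by norm_num), Real.sqrt_sq (by norm_num)]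

lemma sum_pow_div_two_pow_max_le (I : Finset ℕ) (r : ℕ) :
    ∑ q ∈ I, (3 / 2 : ℝ) ^ q * (2 ^ r / 2 ^ max r q) ≤ 6 * (3 / 2) ^ r := by
  obtain ⟨N, hN⟩ : ∃ N, I ⊆ Finset.range (r + 1 + N) :=
    ⟨I.sup id + 1, I.subset_range_sup_succ.trans (Finset.range_subset_range.mpr (by omega))⟩
  have head_eq (q : ℕ) (hq : q ∈ Finset.range (r + 1)) :
      (3 / 2 : ℝ) ^ q * (2 ^ r / 2 ^ max r q) = (3 / 2) ^ q := by
    rw [max_eq_left (by simpa [Nat.lt_succ_iff] using hq), div_self (by positivity), mul_one]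
  have tail_eq (k : ℕ) (_ : k ∈ Finset.range N) :
      (3 / 2 : ℝ) ^ (r + 1 + k) * (2 ^ r / 2 ^ max r (r + 1 + k)) =
        3 / 4 * (3 / 2) ^ r * (3 / 4) ^ k := by
    rw [max_eq_right (by omega), show (3 / 4 : ℝ) ^ k = (3 / 2) ^ k / 2 ^ k by
      rw [← div_pow]; norm_num, pow_add, pow_add, pow_add, pow_add]
    field_simp
    norm_num
  calc ∑ q ∈ I, (3 / 2 : ℝ) ^ q * (2 ^ r / 2 ^ max r q)
    _ ≤ ∑ q ∈ Finset.range (r + 1 + N), (3 / 2 : ℝ) ^ q * (2 ^ r / 2 ^ max r q) :=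
      Finset.sum_le_sum_of_subset_of_nonneg hN fun _ _ _ => by positivity
    _ = ∑ q ∈ Finset.range (r + 1), (3 / 2 : ℝ) ^ q +
          3 / 4 * (3 / 2) ^ r * ∑ k ∈ Finset.range N, (3 / 4 : ℝ) ^ k := by
      rw [Finset.sum_range_add, Finset.sum_congr rfl head_eq, Finset.sum_congr rfl tail_eq,
        Finset.mul_sum]
    _ = (3 * (3 / 2) ^ r - 2) + 3 * (3 / 2) ^ r * (1 - (3 / 4) ^ N) := by
      rw [geom_sum_eq (by norm_num), geom_sum_eq (by norm_num), pow_succ]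
      ring
    _ ≤ 6 * (3 / 2) ^ r := by
      have : 0 ≤ (3 / 2 : ℝ) ^ r * (3 / 4) ^ N := by positivity
      linarith

/-- A positive vector on which `decayMatrix` acts almost as multiplication by a scalar, for use in
the Schur test; any ratio strictly between `1` and `2` could replace `3 / 2`. -/
noncomputable def schurWeight (n : ℕ) (I : Finset ℕ) : Fin n → ℝ :=
  ∑ q ∈ I, (3 / 2 : ℝ) ^ q • decay n q

lemma schurWeight_apply (i : Fin n) :
    schurWeight n I i = ∑ q ∈ I, (3 / 2 : ℝ) ^ q * decay n q i := by
  simp only [schurWeight, Finset.sum_apply, Pi.smul_apply, smul_eq_mul]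

lemma schurWeight_pos (hI : I.Nonempty) (i : Fin n) : 0 < schurWeight n I i := by
  rw [schurWeight_apply]
  exact Finset.sum_pos (fun q _ => mul_pos (by positivity) (Real.exp_pos _)) hI

variable {M : ℝ}

lemma mul_decay_dotProduct_schurWeight_le (hI : ∀ r ∈ I, (2 : ℝ) ^ r ≤ n) (hM : 0 ≤ M)
    (hαM : ∀ r ∈ I, α r * n / 2 ^ r ≤ M) {r : ℕ} (hr : r ∈ I) :
    α r * (decay n r ⬝ᵥ schurWeight n I) ≤ 36 * M * (3 / 2) ^ r := by
  have hn : (0 : ℝ) < n := lt_of_lt_of_le (by positivity) (hI r hr)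
  have α_le : α r ≤ M * 2 ^ r / n := by
    rw [le_div_iff₀ hn, ← div_le_iff₀ (by positivity)]
    exact hαM r hr
  have dotProduct_eq : decay n r ⬝ᵥ schurWeight n I =
      ∑ q ∈ I, (3 / 2 : ℝ) ^ q * (decay n r ⬝ᵥ decay n q) := by
    simp only [schurWeight, dotProduct_sum, dotProduct_smul, smul_eq_mul]
  calc α r * (decay n r ⬝ᵥ schurWeight n I)
    _ ≤ M * 2 ^ r / n * ∑ q ∈ I, (3 / 2 : ℝ) ^ q * (6 * (n / 2 ^ max r q)) := by
      rw [dotProduct_eq]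
      gcongr with q hq
      · exact Finset.sum_nonneg fun q _ => mul_nonneg (by positivity) (decay_dotProduct_nonneg r q)
      · exact decay_dotProduct_le (hI r hr) (hI q hq)
    _ = 6 * M * ∑ q ∈ I, (3 / 2 : ℝ) ^ q * (2 ^ r / 2 ^ max r q) := by
      simp only [Finset.mul_sum]
      refine Finset.sum_congr rfl fun q _ => ?_
      field_simp
    _ ≤ 6 * M * (6 * (3 / 2) ^ r) := by
      gcongr
      exact sum_pow_div_two_pow_max_le I r
    _ = 36 * M * (3 / 2) ^ r := by ring

lemma decayMatrix_mulVec_schurWeight_le (hI : ∀ r ∈ I, (2 : ℝ) ^ r ≤ n) (hM : 0 ≤ M)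
    (hαM : ∀ r ∈ I, α r * n / 2 ^ r ≤ M) (i : Fin n) :
    (decayMatrix n I α).mulVec (schurWeight n I) i ≤ 36 * M * schurWeight n I i := by
  calc (decayMatrix n I α).mulVec (schurWeight n I) i
    _ = ∑ r ∈ I, α r * (decay n r ⬝ᵥ schurWeight n I) * decay n r i := by
      simp only [decayMatrix, Matrix.sum_mulVec, Matrix.smul_mulVec, Matrix.vecMulVec_mulVec,
        Finset.sum_apply, Pi.smul_apply, smul_eq_mul, MulOpposite.smul_eq_mul_unop,
        MulOpposite.unop_op, mul_assoc, mul_comm (decay n _ i)]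
    _ ≤ ∑ r ∈ I, 36 * M * (3 / 2) ^ r * decay n r i := by
      refine Finset.sum_le_sum fun r hr => mul_le_mul_of_nonneg_right ?_ (Real.exp_pos _).le
      exact mul_decay_dotProduct_schurWeight_le hI hM hαM hr
    _ = 36 * M * schurWeight n I i := by
      simp only [schurWeight_apply, Finset.mul_sum, mul_assoc]

lemma specNorm_le_of_abs_le_decayMatrix (hI : ∀ r ∈ I, (2 : ℝ) ^ r ≤ n) (hI' : I.Nonempty)
    (hM : 0 ≤ M) (hαM : ∀ r ∈ I, α r * n / 2 ^ r ≤ M) {η : ℝ} (hη : 0 ≤ η)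
    {E : Matrix (Fin n) (Fin n) ℝ} (hE : ∀ i j, |E i j| ≤ η * decayMatrix n I α i j) :
    specNorm E ≤ η * (36 * M) := by
  refine specNorm_le_of_mulVec_le (P := η • decayMatrix n I α) hE (isSymm_decayMatrix.smul η)
    (schurWeight_pos hI') (by positivity) fun i => ?_
  rw [Matrix.smul_mulVec, Pi.smul_apply, smul_eq_mul, mul_assoc]
  exact mul_le_mul_of_nonneg_left (decayMatrix_mulVec_schurWeight_le hI hM hαM i) hη

end DecayMatrix

section Quadrature

variable {β : Type*} {S T : Finset β} {a b : β → ℝ}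

/-- `(T, b)` is a positive quadrature rule for the discrete measure with mass `a x` at each `x ∈ S`:
its nodes are among those of the measure, its weights are nonnegative, and the total masses
agree. -/
structure IsQuadrature (S : Finset β) (a : β → ℝ) (T : Finset β) (b : β → ℝ) : Prop where
  subset : T ⊆ S
  nonneg : ∀ x ∈ T, 0 ≤ b x
  sum_eq : ∑ x ∈ T, b x = ∑ x ∈ S, a x

lemma exists_isQuadrature_of_mem_convexHull {ι : Type*} [Fintype ι] {Φ : β → ι → ℝ} {W : ℝ}
    (hW : 0 ≤ W) (haW : ∑ x ∈ S, a x = W) {v : ι → ℝ} (hv : v ∈ convexHull ℝ (Φ '' S)) :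
    ∃ T b, IsQuadrature S a T b ∧ T.card ≤ Fintype.card ι + 1 ∧ ∑ x ∈ T, b x • Φ x = W • v := by
  rw [convexHull_eq_union] at hv
  simp only [Set.mem_iUnion] at hv
  obtain ⟨t, ht, ht_indep, hvt⟩ := hv
  have card_le : t.card ≤ Fintype.card ι + 1 := by
    rw [← Fintype.card_coe, ← Module.finrank_fintype_fun_eq_card ℝ (η := ι)]
    exact ht_indep.card_le_finrank_succ.trans (Nat.succ_le_succ (Submodule.finrank_le _))
  obtain ⟨w, hw_nonneg, hw_sum, rfl⟩ := Finset.mem_convexHull'.mp hvt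
  obtain ⟨T, hTS, hinj, rfl⟩ := Finset.exists_subset_injOn_image_eq_of_surjOn (f := Φ) S t ht
  rw [Finset.sum_image hinj] at hw_sum
  refine ⟨T, fun x => W * w (Φ x), ⟨mod_cast hTS, fun x hx => ?_, ?_⟩, ?_, ?_⟩
  · exact mul_nonneg hW (hw_nonneg _ (Finset.mem_image_of_mem Φ hx))
  · rw [← Finset.mul_sum, hw_sum, mul_one, haW]
  · rwa [Finset.card_image_of_injOn hinj] at card_le
  · rw [Finset.sum_image hinj, Finset.smul_sum]
    simp only [smul_smul]

lemma exists_isQuadrature_of_moments {ι : Type*} [Fintype ι] (ha : ∀ x ∈ S, 0 ≤ a x)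
    (φ : ι → β → ℝ) :
    ∃ T b, IsQuadrature S a T b ∧ T.card ≤ Fintype.card ι + 1 ∧
      ∀ i, ∑ x ∈ T, b x * φ i x = ∑ x ∈ S, a x * φ i x := by
  rcases (Finset.sum_nonneg ha).eq_or_lt with hW | hW
  · have a_eq_zero := (Finset.sum_eq_zero_iff_of_nonneg ha).mp hW.symm
    refine ⟨∅, 0, ⟨by simp, by simp, by simpa using hW⟩, by simp, fun i => ?_⟩
    rw [Finset.sum_empty, Finset.sum_eq_zero fun x hx => by rw [a_eq_zero x hx, zero_mul]]
  have mean_mem : ∑ x ∈ S, (a x / ∑ x ∈ S, a x) • (fun i => φ i x) ∈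
      convexHull ℝ ((fun x i => φ i x) '' S) := by
    refine (convex_convexHull ℝ _).sum_mem (fun x hx => div_nonneg (ha x hx) hW.le) ?_ fun x hx =>
      subset_convexHull ℝ _ (Set.mem_image_of_mem _ hx)
    rw [← Finset.sum_div, div_self hW.ne']
  obtain ⟨T, b, hTb, hcard, hmean⟩ := exists_isQuadrature_of_mem_convexHull hW.le rfl mean_mem
  refine ⟨T, b, hTb, hcard, fun i => ?_⟩
  simpa [Finset.mul_sum, ← mul_assoc, mul_div_cancel₀ _ hW.ne'] using congrFun hmean i

lemma abs_sum_mul_le_of_abs_le {f : β → ℝ} {δ : ℝ} (ha : ∀ x ∈ S, 0 ≤ a x)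
    (hf : ∀ x ∈ S, |f x| ≤ δ) : |∑ x ∈ S, a x * f x| ≤ (∑ x ∈ S, a x) * δ := by
  rw [Finset.sum_mul]
  refine (Finset.abs_sum_le_sum_abs _ _).trans (Finset.sum_le_sum fun x hx => ?_)
  rw [abs_mul, abs_of_nonneg (ha x hx)]
  exact mul_le_mul_of_nonneg_left (hf x hx) (ha x hx)

lemma IsQuadrature.abs_sum_sub_sum_le (hTb : IsQuadrature S a T b) (ha : ∀ x ∈ S, 0 ≤ a x)
    {f g : β → ℝ} (hg : ∑ x ∈ T, b x * g x = ∑ x ∈ S, a x * g x) {δ : ℝ}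
    (hfg : ∀ x ∈ S, |f x - g x| ≤ δ) :
    |∑ x ∈ S, a x * f x - ∑ x ∈ T, b x * f x| ≤ 2 * (∑ x ∈ S, a x) * δ := by
  have sub_eq : ∑ x ∈ S, a x * f x - ∑ x ∈ T, b x * f x =
      ∑ x ∈ S, a x * (f x - g x) - ∑ x ∈ T, b x * (f x - g x) := by
    simp only [mul_sub, Finset.sum_sub_distrib, hg]
    ring
  calc |∑ x ∈ S, a x * f x - ∑ x ∈ T, b x * f x|
    _ ≤ |∑ x ∈ S, a x * (f x - g x)| + |∑ x ∈ T, b x * (f x - g x)| := sub_eq ▸ abs_sub _ _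
    _ ≤ (∑ x ∈ S, a x) * δ + (∑ x ∈ T, b x) * δ :=
      add_le_add (abs_sum_mul_le_of_abs_le ha hfg)
        (abs_sum_mul_le_of_abs_le hTb.nonneg fun x hx => hfg x (hTb.subset hx))
    _ = 2 * (∑ x ∈ S, a x) * δ := by
      rw [hTb.sum_eq]
      ring

end Quadrature

section ExpTaylor

/-- Each term of the Taylor tail at `y` is at most `exp (-D)` times the same term at `e * y`. -/
lemma exp_sub_sum_range_le {y : ℝ} (hy : 0 ≤ y) (D : ℕ) :
    Real.exp y - ∑ k ∈ Finset.range D, y ^ k / (k.factorial : ℝ) ≤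
      Real.exp (Real.exp 1 * y - D) := by
  have tail_hasSum (z : ℝ) := (hasSum_nat_add_iff' D).mpr (NormedSpace.expSeries_div_hasSum_exp z)
  simp only [← Real.exp_eq_exp_ℝ] at tail_hasSum
  have term_le (m : ℕ) : y ^ (m + D) / ((m + D).factorial : ℝ) ≤
      Real.exp (-D) * ((Real.exp 1 * y) ^ (m + D) / ((m + D).factorial : ℝ)) := by
    have exp_eq : Real.exp (-D) * Real.exp 1 ^ (m + D) = Real.exp m := by
      rw [← Real.exp_nat_mul, ← Real.exp_add]
      push_cast
      ring_nf
    rw [mul_pow, mul_div_assoc, ← mul_assoc, exp_eq]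
    exact le_mul_of_one_le_left (by positivity) (Real.one_le_exp (Nat.cast_nonneg m))
  refine (hasSum_le term_le (tail_hasSum y) ((tail_hasSum (Real.exp 1 * y)).mul_left _)).trans ?_
  rw [sub_eq_neg_add (Real.exp 1 * y), Real.exp_add]
  gcongr
  exact sub_le_self _ (Finset.sum_nonneg fun k _ => by positivity)

lemma abs_exp_neg_sub_sum_range_le {y Y : ℝ} (hy : 0 ≤ y) (hyY : y ≤ Y) {D : ℕ} (hD : 4 * Y ≤ D) :
    |Real.exp (-y) - ∑ k ∈ Finset.range D, (-y) ^ k / (k.factorial : ℝ)| ≤ Real.exp (-Y) := by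
  have abs_le : |Real.exp (-y) - ∑ k ∈ Finset.range D, (-y) ^ k / (k.factorial : ℝ)| ≤
      Real.exp y - ∑ k ∈ Finset.range D, y ^ k / (k.factorial : ℝ) := by
    have := Complex.norm_exp_sub_sum_le_exp_norm_sub_sum ((-y : ℝ) : ℂ) D
    rw [Complex.norm_real, norm_neg, Real.norm_of_nonneg hy] at this
    rw [← Real.norm_eq_abs, ← Complex.norm_real]
    push_cast at this ⊢
    exact this
  refine (abs_le.trans (exp_sub_sum_range_le hy D)).trans (Real.exp_le_exp.mpr ?_)
  nlinarith [Real.exp_one_lt_d9]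

end ExpTaylor

section MomentCompression

lemma log_one_div_abs_nonneg {x : ℝ} (hx1 : |x| ≤ 1) (hx0 : x ≠ 0) : 0 ≤ Real.log (1 / |x|) :=
  Real.log_nonneg ((one_le_div (abs_pos.mpr hx0)).mpr hx1)

lemma abs_pow_eq_exp_neg_mul_log {x : ℝ} (hx : x ≠ 0) (s : ℕ) :
    |x| ^ s = Real.exp (-(s * Real.log (1 / |x|))) := by
  rw [one_div, Real.log_inv, mul_neg, neg_neg, Real.exp_nat_mul, Real.exp_log (abs_pos.mpr hx)]

lemma pow_eq_sign_pow_mod_two_mul_abs_pow {x : ℝ} (hx : x ≠ 0) (s : ℕ) :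
    x ^ s = (SignType.sign x : ℝ) ^ (s % 2) * |x| ^ s := by
  have sign_sq : (SignType.sign x : ℝ) ^ 2 = 1 := by
    rcases hx.lt_or_gt with h | h <;> simp [h]
  conv_lhs => rw [← sign_mul_abs x, mul_pow, ← Nat.div_add_mod s 2, pow_add, pow_mul, sign_sq,
    one_pow, one_mul, Nat.div_add_mod]

variable {S T : Finset ℝ} {a b : ℝ → ℝ}

/-- The matched functions are `log (1 / |x|) ^ k` and `sign x * log (1 / |x|) ^ k` for `k < D`:
they span the Taylor polynomials of `x ^ s = ± exp (-s * log (1 / |x|))`, whatever the parity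
of `s`. -/
lemma exists_isQuadrature_of_mul_log_le (ha : ∀ x ∈ S, 0 ≤ a x) (hS : ∀ x ∈ S, |x| ≤ 1 ∧ x ≠ 0)
    (D : ℕ) :
    ∃ T b, IsQuadrature S a T b ∧ T.card ≤ 2 * D + 1 ∧
      ∀ (s : ℕ) (Y : ℝ), (∀ x ∈ S, s * Real.log (1 / |x|) ≤ Y) → 4 * Y ≤ D →
        |powerMoment S a s - powerMoment T b s| ≤ 2 * (∑ x ∈ S, a x) * Real.exp (-Y) := by
  obtain ⟨T, b, hTb, hcard, hmatch⟩ := exists_isQuadrature_of_moments ha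
    fun (p : Fin 2 × Fin D) x => (SignType.sign x : ℝ) ^ (p.1 : ℕ) * Real.log (1 / |x|) ^ (p.2 : ℕ)
  refine ⟨T, b, hTb, by simpa using hcard, fun s Y hY hD => ?_⟩
  let taylor (x : ℝ) : ℝ := ∑ k ∈ Finset.range D,
    (SignType.sign x : ℝ) ^ (s % 2) * ((-(s * Real.log (1 / |x|))) ^ k / (k.factorial : ℝ))
  refine hTb.abs_sum_sub_sum_le ha (g := taylor) ?_ fun x hx => ?_
  · simp only [taylor, Finset.mul_sum]
    rw [Finset.sum_comm, Finset.sum_comm (s := S)]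
    refine Finset.sum_congr rfl fun k hk => ?_
    have := hmatch (⟨s % 2, Nat.mod_lt s two_pos⟩, ⟨k, Finset.mem_range.mp hk⟩)
    have := congrArg (fun z => (-(s : ℝ)) ^ k / (k.factorial : ℝ) * z) this
    simp only [Finset.mul_sum] at this
    convert this using 2 <;> rw [← neg_mul, mul_pow] <;> ring
  · obtain ⟨hx1, hx0⟩ := hS x hx
    have sign_abs_le : |(SignType.sign x : ℝ) ^ (s % 2)| ≤ 1 := by
      rcases hx0.lt_or_gt with h | h <;> simp [h]
    have log_nonneg := log_one_div_abs_nonneg hx1 hx0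
    simp only [taylor]
    rw [pow_eq_sign_pow_mod_two_mul_abs_pow hx0, ← Finset.mul_sum, ← mul_sub, abs_mul,
      abs_pow_eq_exp_neg_mul_log hx0]
    exact (mul_le_of_le_one_left (abs_nonneg _) sign_abs_le).trans
      (abs_exp_neg_sub_sum_range_le (by positivity) (hY x hx) hD)

lemma IsQuadrature.abs_powerMoment_sub_le_of_le_mul_log (hTb : IsQuadrature S a T b)
    (ha : ∀ x ∈ S, 0 ≤ a x) (hS : ∀ x ∈ S, x ≠ 0) {s : ℕ} {Y : ℝ}
    (hY : ∀ x ∈ S, Y ≤ s * Real.log (1 / |x|)) :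
    |powerMoment S a s - powerMoment T b s| ≤ 2 * (∑ x ∈ S, a x) * Real.exp (-Y) := by
  refine hTb.abs_sum_sub_sum_le ha (g := 0) (by simp) fun x hx => ?_
  rw [Pi.zero_apply, sub_zero, abs_pow, abs_pow_eq_exp_neg_mul_log (hS x hx)]
  exact Real.exp_le_exp.mpr (neg_le_neg (hY x hx))

variable {θ l : ℝ}

/-- Past `θ * s = 24` the moments themselves are negligible. -/
lemma IsQuadrature.abs_powerMoment_sub_le_of_le_log (hTb : IsQuadrature S a T b)
    (ha : ∀ x ∈ S, 0 ≤ a x) (hS : ∀ x ∈ S, x ≠ 0) (hl : 2 / 3 ≤ l)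
    (hlog : ∀ x ∈ S, θ * l ≤ Real.log (1 / |x|)) {s : ℕ} (hs : 24 ≤ θ * s) :
    |powerMoment S a s - powerMoment T b s| ≤
      2 * (∑ x ∈ S, a x) * Real.exp (-(12 * l + θ * s / 3)) := by
  refine hTb.abs_powerMoment_sub_le_of_le_mul_log ha hS fun x hx => ?_
  calc 12 * l + θ * s / 3 ≤ s * (θ * l) := by nlinarith
    _ ≤ s * Real.log (1 / |x|) := mul_le_mul_of_nonneg_left (hlog x hx) (Nat.cast_nonneg s)

lemma exists_isQuadrature_of_band (ha : ∀ x ∈ S, 0 ≤ a x) (hS : ∀ x ∈ S, |x| ≤ 1 ∧ x ≠ 0)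
    (hl : 2 / 3 ≤ l) {D : ℕ} (hD : 192 * l ≤ D)
    (hlog : ∀ x ∈ S, Real.log (1 / |x|) ≤ θ * (2 * l)) :
    ∃ T b, IsQuadrature S a T b ∧ T.card ≤ 2 * D + 1 ∧
      ∀ s : ℕ, (24 < θ * s → ∀ x ∈ S, θ * l ≤ Real.log (1 / |x|)) →
        |powerMoment S a s - powerMoment T b s| ≤
          2 * (∑ x ∈ S, a x) * Real.exp (-(12 * l + θ * s / 3)) := by
  obtain ⟨T, b, hTb, hcard, hTaylor⟩ := exists_isQuadrature_of_mul_log_le ha hS D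
  refine ⟨T, b, hTb, hcard, fun s hlow => ?_⟩
  rcases le_or_gt (θ * s) 24 with hs | hs
  · have taylor_bound := hTaylor s (48 * l) (fun x hx => ?_) (by linarith)
    · refine taylor_bound.trans ?_
      have := Finset.sum_nonneg ha
      gcongr
      linarith
    · calc s * Real.log (1 / |x|) ≤ s * (θ * (2 * l)) := by gcongr; exact hlog x hx
        _ = θ * s * (2 * l) := by ring
        _ ≤ 24 * (2 * l) := by gcongr
        _ = 48 * l := by ring
  · exact hTb.abs_powerMoment_sub_le_of_le_log ha (fun x hx => (hS x hx).2) hl (hlow hs) hs.le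

lemma exists_isQuadrature_of_tail (ha : ∀ x ∈ S, 0 ≤ a x) (hS : ∀ x ∈ S, x ≠ 0)
    (hl : 2 / 3 ≤ l) {D : ℕ} (hθ : 0 ≤ θ) (hD : 24 ≤ θ * D)
    (hlog : ∀ x ∈ S, θ * l ≤ Real.log (1 / |x|)) :
    ∃ T b, IsQuadrature S a T b ∧ T.card ≤ D + 1 ∧
      ∀ s : ℕ, |powerMoment S a s - powerMoment T b s| ≤
        2 * (∑ x ∈ S, a x) * Real.exp (-(12 * l + θ * s / 3)) := by
  obtain ⟨T, b, hTb, hcard, hmatch⟩ :=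
    exists_isQuadrature_of_moments ha fun (k : Fin D) x => x ^ (k : ℕ)
  refine ⟨T, b, hTb, by simpa using hcard, fun s => ?_⟩
  rcases lt_or_ge s D with hs | hs
  · have moment_eq : powerMoment T b s = powerMoment S a s := hmatch ⟨s, hs⟩
    have := Finset.sum_nonneg ha
    rw [moment_eq, sub_self, abs_zero]
    positivity
  · refine hTb.abs_powerMoment_sub_le_of_le_log ha hS hl hlog (hD.trans ?_)
    gcongr

end MomentCompression

section Buckets

variable {X : Finset ℝ} {lam : ℝ} {n R r : ℕ} {x : ℝ}

lemma bucket_subset : bucket X lam n R r ⊆ X := by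
  unfold bucket
  split_ifs <;> exact Finset.filter_subset _ _

lemma lt_log_of_mem_bucket (hr : r ≠ 0) (hrR : r ≤ R + 1) (hx : x ∈ bucket X lam n R r) :
    (2 : ℝ) ^ (r - 1) * lam / n < Real.log (1 / |x|) := by
  rw [bucket, if_neg hr] at hx
  split_ifs at hx with hle
  · exact (Finset.mem_filter.mp hx).2.1
  · obtain rfl : r = R + 1 := by omega
    exact (Finset.mem_filter.mp hx).2

lemma log_le_of_mem_bucket (hrR : r ≤ R) (hx : x ∈ bucket X lam n R r) :
    Real.log (1 / |x|) ≤ (2 : ℝ) ^ r * lam / n := by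
  rw [bucket, if_pos hrR] at hx
  split_ifs at hx with hr
  · simpa [hr] using (Finset.mem_filter.mp hx).2.2
  · exact (Finset.mem_filter.mp hx).2.2

lemma sum_range_succ_bucket (hX : ∀ x ∈ X, |x| ≤ 1 ∧ x ≠ 0) (hlam : 0 ≤ lam) (hrR : r ≤ R)
    (f : ℝ → ℝ) :
    ∑ q ∈ Finset.range (r + 1), ∑ x ∈ bucket X lam n R q, f x =
      ∑ x ∈ X with Real.log (1 / |x|) ≤ 2 ^ r * lam / n, f x := by
  induction r with
  | zero =>
    rw [Finset.sum_range_one, bucket, if_pos rfl]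
    refine Finset.sum_congr (Finset.filter_congr fun x hx => ?_) fun _ _ => rfl
    rw [pow_zero, one_mul, and_iff_right (log_one_div_abs_nonneg (hX x hx).1 (hX x hx).2)]
  | succ k ih =>
    have threshold_mono : (2 : ℝ) ^ k * lam / n ≤ 2 ^ (k + 1) * lam / n := by
      gcongr <;> norm_num
    rw [Finset.sum_range_succ, ih (by omega), bucket, if_neg k.succ_ne_zero, if_pos hrR,
      Nat.add_sub_cancel, Finset.sum_filter, Finset.sum_filter, Finset.sum_filter,
      ← Finset.sum_add_distrib]
    refine Finset.sum_congr rfl fun x _ => ?_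
    rcases le_or_gt (Real.log (1 / |x|)) (2 ^ k * lam / n) with hx | hx
    · rw [if_pos hx, if_neg fun h => h.1.not_ge hx, if_pos (hx.trans threshold_mono), add_zero]
    · simp only [hx, hx.not_ge, true_and, if_false, zero_add]

lemma sum_powerMoment_bucket (hX : ∀ x ∈ X, |x| ≤ 1 ∧ x ≠ 0) (hlam : 0 ≤ lam) (a : ℝ → ℝ)
    (s : ℕ) :
    ∑ r ∈ Finset.range (R + 2), powerMoment (bucket X lam n R r) a s = powerMoment X a s := by
  simp only [powerMoment]
  rw [Finset.sum_range_succ, sum_range_succ_bucket hX hlam le_rfl, bucket, if_neg R.succ_ne_zero,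
    if_neg (by omega)]
  simp only [← not_le]
  exact Finset.sum_filter_add_sum_filter_not _ _ _

variable {a : ℝ → ℝ} {l : ℝ} {D : ℕ}

/-- Bucket `0` is not bounded away from `1`, but there `θ * s ≤ 2` with `θ = 1 / n`, so its
moments are all in the range of the Taylor approximation. -/
lemma exists_powerMoment_bucket_approx (ha : ∀ x ∈ X, 0 ≤ a x) (hX : ∀ x ∈ X, |x| ≤ 1 ∧ x ≠ 0)
    (hl : 2 / 3 ≤ l) (hD : 480 * l ≤ D) (hn : n ≠ 0) (hnR : n ≤ 20 * l * 2 ^ (R + 1))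
    (hrR : r ≤ R + 1) :
    ∃ (T : Finset ℝ) (b : ℝ → ℝ), T.card ≤ 2 * D + 1 ∧ ∀ s ≤ 2 * n,
      |powerMoment (bucket X (2 * l) n R r) a s - powerMoment T b s| ≤
        2 * (∑ x ∈ bucket X (2 * l) n R r, a x) *
          Real.exp (-(12 * l + (2 : ℝ) ^ r / n * s / 3)) := by
  have hn0 : (0 : ℝ) < n := by positivity
  have ha' : ∀ x ∈ bucket X (2 * l) n R r, 0 ≤ a x := fun x hx => ha x (bucket_subset hx)
  have hX' : ∀ x ∈ bucket X (2 * l) n R r, |x| ≤ 1 ∧ x ≠ 0 := fun x hx => hX x (bucket_subset hx)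
  have le_log (hr : r ≠ 0) : ∀ x ∈ bucket X (2 * l) n R r,
      (2 : ℝ) ^ r / n * l ≤ Real.log (1 / |x|) := fun x hx => by
    obtain ⟨k, rfl⟩ := Nat.exists_eq_succ_of_ne_zero hr
    refine le_of_eq_of_le ?_ (lt_log_of_mem_bucket hr hrR hx).le
    rw [Nat.succ_eq_add_one, Nat.add_sub_cancel, pow_succ]
    ring
  rcases hrR.lt_or_eq with hlt | rfl
  · have log_le : ∀ x ∈ bucket X (2 * l) n R r, Real.log (1 / |x|) ≤ (2 : ℝ) ^ r / n * (2 * l) :=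
      fun x hx => (log_le_of_mem_bucket (Nat.lt_succ_iff.mp hlt) hx).trans_eq (by ring)
    obtain ⟨T, b, -, hcard, hTb⟩ :=
      exists_isQuadrature_of_band ha' hX' hl (D := D) (by linarith) log_le
    refine ⟨T, b, hcard, fun s hs => hTb s fun hlarge => le_log ?_⟩
    rintro rfl
    have hs' : (s : ℝ) ≤ 2 * n := mod_cast hs
    rw [pow_zero, one_div_mul_eq_div, lt_div_iff₀ hn0] at hlarge
    linarith
  · have hθD : 24 ≤ (2 : ℝ) ^ (R + 1) / n * D := by
      rw [div_mul_eq_mul_div, le_div_iff₀ hn0]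
      nlinarith [mul_le_mul_of_nonneg_left hD (by positivity : (0 : ℝ) ≤ 2 ^ (R + 1))]
    obtain ⟨T, b, -, hcard, hTb⟩ := exists_isQuadrature_of_tail ha' (fun x hx => (hX' x hx).2) hl
      (by positivity) hθD (le_log R.succ_ne_zero)
    exact ⟨T, b, by omega, fun s _ => hTb s⟩

lemma exists_vdvT_approx (ha : ∀ x ∈ X, 0 ≤ a x) (hX : ∀ x ∈ X, |x| ≤ 1 ∧ x ≠ 0)
    (hl : 2 / 3 ≤ l) (hD : 480 * l ≤ D) (hn : n ≠ 0) (hnR : n ≤ 20 * l * 2 ^ (R + 1)) :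
    ∃ (Y : Finset ℝ) (b : ℝ → ℝ), Y.card ≤ (R + 2) * (2 * D + 1) ∧
      ∀ i j, |(vdvT n X a - vdvT n Y b) i j| ≤ 2 * Real.exp (-(12 * l)) *
        decayMatrix n (Finset.range (R + 2)) (fun r => ∑ x ∈ bucket X (2 * l) n R r, a x) i j := by
  have bucket_approx (r : ℕ) (hr : r ∈ Finset.range (R + 2)) :=
    exists_powerMoment_bucket_approx (D := D) ha hX hl hD hn hnR
      (Nat.lt_succ_iff.mp (Finset.mem_range.mp hr))
  choose! T b hcard hmoment using bucket_approx
  refine ⟨(Finset.range (R + 2)).biUnion T,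
    fun x => ∑ r ∈ Finset.range (R + 2), if x ∈ T r then b r x else 0, ?_, fun i j => ?_⟩
  · refine (Finset.card_biUnion_le_card_mul _ _ _ hcard).trans_eq ?_
    rw [Finset.card_range]
  rw [Matrix.sub_apply, vdvT_apply, vdvT_apply, powerMoment_biUnion,
    ← sum_powerMoment_bucket (n := n) (R := R) hX (by positivity : 0 ≤ 2 * l),
    ← Finset.sum_sub_distrib, decayMatrix_apply, Finset.mul_sum]
  refine (Finset.abs_sum_le_sum_abs _ _).trans (Finset.sum_le_sum fun r hr => ?_)
  refine (hmoment r hr (i + j) (by omega)).trans_eq ?_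
  rw [decay, decay, ← Real.exp_add, mul_left_comm, mul_assoc, mul_assoc, ← Real.exp_add,
    mul_left_comm]
  congr 4
  push_cast
  field_simp
  ring

end Buckets

section Scales

variable {A l : ℝ} {n : ℕ}

lemma two_pow_floor_logb_le (hA : 1 ≤ A) : (2 : ℝ) ^ ⌊Real.logb 2 A⌋₊ ≤ A := by
  rw [← Real.rpow_natCast, ← Real.le_logb_iff_rpow_le one_lt_two (by positivity)]
  exact Nat.floor_le (Real.logb_nonneg one_lt_two hA)

lemma lt_two_pow_floor_logb_add_one (hA : 0 < A) : A < 2 ^ (⌊Real.logb 2 A⌋₊ + 1) := by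
  rw [← Real.rpow_natCast, ← Real.logb_lt_iff_lt_rpow one_lt_two hA]
  exact_mod_cast Nat.lt_floor_add_one (Real.logb 2 A)

lemma one_div_ten_le_log_ten_div_nine : 1 / 10 ≤ Real.log (10 / 9) := by
  have := Real.one_sub_inv_le_log_of_pos (show (0 : ℝ) < 10 / 9 by norm_num)
  norm_num at this ⊢
  linarith

lemma log_ten_div_nine_le_one_div_nine : Real.log (10 / 9) ≤ 1 / 9 := by
  have := Real.log_le_sub_one_of_pos (show (0 : ℝ) < 10 / 9 by norm_num)
  norm_num at this ⊢
  linarith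

lemma two_pow_floor_logb_add_two_le (hl : 2 / 3 ≤ l) (hln : 2 * l ≤ n * Real.log (10 / 9)) :
    (2 : ℝ) ^ (⌊Real.logb 2 (Real.log (10 / 9) * n / (2 * l))⌋₊ + 2) ≤ n := by
  have floor_le := two_pow_floor_logb_le (A := Real.log (10 / 9) * n / (2 * l))
    ((one_le_div (by linarith)).mpr (by linarith))
  rw [le_div_iff₀ (by linarith)] at floor_le
  have log_mul_le := mul_le_mul_of_nonneg_right log_ten_div_nine_le_one_div_nine
    (Nat.cast_nonneg (α := ℝ) n)
  rw [pow_add]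
  nlinarith [pow_pos (two_pos (α := ℝ)) ⌊Real.logb 2 (Real.log (10 / 9) * n / (2 * l))⌋₊]

lemma le_mul_two_pow_floor_logb_add_one (hl : 0 < l) (hn : n ≠ 0) :
    n ≤ 20 * l * 2 ^ (⌊Real.logb 2 (Real.log (10 / 9) * n / (2 * l))⌋₊ + 1) := by
  have : 0 < Real.log (10 / 9) := by linarith [one_div_ten_le_log_ten_div_nine]
  have lt_floor := lt_two_pow_floor_logb_add_one (A := Real.log (10 / 9) * n / (2 * l))
    (by positivity)
  rw [div_lt_iff₀ (by positivity)] at lt_floor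
  have le_log_mul := mul_le_mul_of_nonneg_right one_div_ten_le_log_ten_div_nine
    (Nat.cast_nonneg (α := ℝ) n)
  linarith

lemma mul_ceil_add_one_le {k : ℕ} (hl : 2 / 3 ≤ l) (hkn : (2 : ℝ) ^ k ≤ n) :
    (k : ℝ) * (2 * ⌈480 * l⌉₊ + 1) ≤ 1500 * Real.log n * l := by
  have log_le : k * Real.log 2 ≤ Real.log n := by
    rw [← Real.log_pow]
    exact Real.log_le_log (by positivity) hkn
  have k_le : (k : ℝ) ≤ 3 / 2 * Real.log n := by
    nlinarith [Real.log_two_gt_d9, Nat.cast_nonneg (α := ℝ) k]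
  have ceil_le : 2 * (⌈480 * l⌉₊ : ℝ) + 1 ≤ 965 * l := by
    linarith [Nat.ceil_lt_add_one (show 0 ≤ 480 * l by positivity)]
  calc (k : ℝ) * (2 * ⌈480 * l⌉₊ + 1) ≤ 3 / 2 * Real.log n * (965 * l) := by gcongr
    _ ≤ 1500 * Real.log n * l := by
      nlinarith [mul_nonneg (Real.log_natCast_nonneg n) (by positivity : 0 ≤ l)]

variable {ε : ℝ}

lemma two_thirds_le_log_one_div (hε : 0 < ε) (hε2 : ε < 1 / 2) : 2 / 3 ≤ Real.log (1 / ε) := by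
  have : Real.log 2 ≤ Real.log (1 / ε) :=
    Real.log_le_log two_pos ((le_one_div two_pos hε).mpr hε2.le)
  linarith [Real.log_two_gt_d9]

lemma mul_log_one_div_mul_exp_le (hε : 0 < ε) (hε2 : ε < 1 / 2) :
    240 * Real.log (1 / ε) * Real.exp (-(12 * Real.log (1 / ε))) ≤ ε := by
  have exp_eq : Real.exp (-(12 * Real.log (1 / ε))) = ε ^ 12 := by
    rw [one_div, Real.log_inv, mul_neg, neg_neg]
    exact_mod_cast (Real.exp_nat_mul _ 12).trans (by rw [Real.exp_log hε])
  have log_mul_le : Real.log (1 / ε) * ε ≤ 1 := by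
    rw [← le_div_iff₀ hε]
    exact Real.log_le_self (by positivity)
  calc 240 * Real.log (1 / ε) * Real.exp (-(12 * Real.log (1 / ε)))
    _ = 240 * (Real.log (1 / ε) * ε) * ε ^ 10 * ε := by
      rw [exp_eq]
      ring
    _ ≤ 240 * 1 * (1 / 2) ^ 10 * ε := by gcongr
    _ ≤ ε := by linarith

end Scales

section ErrorBounds

variable {n R : ℕ} {w : ℕ → ℝ} {l η ε : ℝ} {E : Matrix (Fin n) (Fin n) ℝ}

lemma specNorm_le_mul_of_forall_le {M : ℝ} (hR : (2 : ℝ) ^ (R + 1) ≤ n) (hw : 0 ≤ w 0)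
    (hM : ∀ r ∈ Finset.range (R + 2), w r * n / 2 ^ r ≤ M) (hη : 0 ≤ η) (hηε : 36 * η ≤ ε)
    (hE : ∀ i j, |E i j| ≤ η * decayMatrix n (Finset.range (R + 2)) w i j) :
    specNorm E ≤ ε * M := by
  have M_nonneg : 0 ≤ M := le_trans (by positivity) (hM 0 (by simp))
  have two_pow_le : ∀ r ∈ Finset.range (R + 2), (2 : ℝ) ^ r ≤ n := fun r hr =>
    (pow_le_pow_right₀ one_le_two (Nat.lt_succ_iff.mp (Finset.mem_range.mp hr))).trans hR
  calc specNorm E ≤ η * (36 * M) :=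
      specNorm_le_of_abs_le_decayMatrix two_pow_le (by simp) M_nonneg hM hη hE
    _ = 36 * η * M := by ring
    _ ≤ ε * M := by gcongr

lemma froNorm_decayMatrix_range_succ_le {k : ℕ} (hk : (2 : ℝ) ^ k ≤ n) (hw : ∀ r, 0 ≤ w r) :
    froNorm (decayMatrix n (Finset.range (k + 1)) w) ≤
      6 * (Real.sqrt (∑ r ∈ Finset.range k, ∑ q ∈ Finset.range k,
        w r * w q * ((n : ℝ) / 2 ^ max r q) ^ 2) + w k * (n / 2 ^ k)) := by
  have split : decayMatrix n (Finset.range (k + 1)) w =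
      decayMatrix n (Finset.range k) w + decayMatrix n {k} w := by
    simp only [decayMatrix, Finset.sum_range_succ, Finset.sum_singleton]
  have head_le := froNorm_decayMatrix_le (I := Finset.range k) (fun r hr =>
    (pow_le_pow_right₀ one_le_two (Finset.mem_range.mp hr).le).trans hk) fun r _ => hw r
  have last_le := froNorm_decayMatrix_le (I := {k}) (by simpa using hk) fun r _ => hw r
  have last_eq : w k * w k * ((n : ℝ) / 2 ^ k) ^ 2 = (w k * (n / 2 ^ k)) ^ 2 := by ring
  have := hw k
  rw [Finset.sum_singleton, Finset.sum_singleton, max_self, last_eq,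
    Real.sqrt_sq (by positivity)] at last_le
  rw [split, mul_add]
  exact (froNorm_add_le _ _).trans (add_le_add head_le last_le)

lemma froNorm_le_mul_sqrt_add (hR : (2 : ℝ) ^ (R + 1) ≤ n) (hw : ∀ r, 0 ≤ w r) (hl : 2 / 3 ≤ l)
    (hnR : n ≤ 20 * l * 2 ^ (R + 1)) (hη : 0 ≤ η) (hηε : 120 * l * η ≤ ε)
    (hE : ∀ i j, |E i j| ≤ η * decayMatrix n (Finset.range (R + 2)) w i j) :
    froNorm E ≤ ε * (Real.sqrt (∑ r ∈ Finset.range (R + 1), ∑ q ∈ Finset.range (R + 1),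
      w r * w q * ((n : ℝ) / 2 ^ max r q) ^ 2) + w (R + 1)) := by
  set Q := Real.sqrt (∑ r ∈ Finset.range (R + 1), ∑ q ∈ Finset.range (R + 1),
    w r * w q * ((n : ℝ) / 2 ^ max r q) ^ 2)
  have ratio_le : (n : ℝ) / 2 ^ (R + 1) ≤ 20 * l := (div_le_iff₀ (by positivity)).mpr hnR
  have Q_nonneg : 0 ≤ Q := Real.sqrt_nonneg _
  have w_nonneg := hw (R + 1)
  calc froNorm E ≤ η * froNorm (decayMatrix n (Finset.range (R + 2)) w) :=
      froNorm_le_mul_of_abs_le hη hE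
    _ ≤ η * (6 * (Q + w (R + 1) * (n / 2 ^ (R + 1)))) := by
      gcongr
      exact froNorm_decayMatrix_range_succ_le hR hw
    _ ≤ η * (6 * (20 * l * Q + w (R + 1) * (20 * l))) := by
      gcongr
      exact le_mul_of_one_le_left Q_nonneg (by linarith)
    _ = 120 * l * η * (Q + w (R + 1)) := by ring
    _ ≤ ε * (Q + w (R + 1)) := by gcongr

end ErrorBounds

/-- There is a Hankel matrix `Ĥ` of rank `O(ln n · ln(1/ε))` approximating
`H = V_X D_X V_Xᵀ` with spectral error `ε · max_r w_r n/2^r` and the corresponding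
Frobenius error bound. -/
theorem bucket_approx_error :
    ∃ C : ℝ, 0 < C ∧
      ∀ (n : ℕ), 2 ≤ n → ∀ ε : ℝ, 0 < ε → ε < 1 / 2 →
        ∀ lam : ℝ, lam = 2 * Real.log (1 / ε) → lam ≤ n * Real.log (10 / 9) →
          ∀ R : ℕ, R = ⌊Real.logb 2 (Real.log (10 / 9) * n / lam)⌋₊ →
            ∀ (X : Finset ℝ) (a : ℝ → ℝ),
              (∀ x ∈ X, |x| ≤ 1 ∧ x ≠ 0) → (∀ x ∈ X, 0 < a x) →
              ∀ w : ℕ → ℝ, (∀ r, w r = ∑ x ∈ bucket X lam n R r, a x) →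
                ∃ Hhat : Matrix (Fin n) (Fin n) ℝ, IsHankel Hhat ∧
                  (Hhat.rank : ℝ) ≤ C * Real.log n * Real.log (1 / ε) ∧
                  specNorm (vdvT n X a - Hhat) ≤
                    ε * ((Finset.range (R + 2)).sup'
                          (Finset.nonempty_range_iff.mpr (by omega))
                          (fun r => w r * n / 2 ^ r)) ∧
                  froNorm (vdvT n X a - Hhat) ≤
                    ε * (Real.sqrt (∑ r₁ ∈ Finset.range (R + 1), ∑ r₂ ∈ Finset.range (R + 1),
                          w r₁ * w r₂ * ((n : ℝ) / 2 ^ (max r₁ r₂)) ^ 2) + w (R + 1)) := by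
  refine ⟨1500, by norm_num, ?_⟩
  rintro n hn ε hε hε2 lam rfl hlam R rfl X a hX ha w hw
  set l := Real.log (1 / ε)
  set R := ⌊Real.logb 2 (Real.log (10 / 9) * n / (2 * l))⌋₊
  have hl : 2 / 3 ≤ l := two_thirds_le_log_one_div hε hε2
  have hnR : n ≤ 20 * l * 2 ^ (R + 1) :=
    le_mul_two_pow_floor_logb_add_one (by positivity) (by omega)
  have hR2 : (2 : ℝ) ^ (R + 2) ≤ n := two_pow_floor_logb_add_two_le hl hlam
  have hR1 : (2 : ℝ) ^ (R + 1) ≤ n := (pow_le_pow_right₀ one_le_two (by omega)).trans hR2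
  have w_nonneg (r : ℕ) : 0 ≤ w r :=
    hw r ▸ Finset.sum_nonneg fun x hx => (ha x (bucket_subset hx)).le
  have error_le : 120 * l * (2 * Real.exp (-(12 * l))) ≤ ε := by
    linarith [mul_log_one_div_mul_exp_le hε hε2]
  obtain ⟨Y, b, hcard, herr⟩ := exists_vdvT_approx (fun x hx => (ha x hx).le) hX hl
    (Nat.le_ceil (480 * l)) (by omega) hnR
  rw [← funext hw] at herr
  refine ⟨vdvT n Y b, isHankel_vdvT Y b, ?_,
    specNorm_le_mul_of_forall_le hR1 (w_nonneg 0)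
      (fun r hr => Finset.le_sup' (fun r => w r * n / 2 ^ r) hr) (by positivity)
      (by nlinarith [Real.exp_pos (-(12 * l))]) herr,
    froNorm_le_mul_sqrt_add hR1 w_nonneg hl hnR (by positivity) error_le herr⟩
  calc ((vdvT n Y b).rank : ℝ) ≤ (R + 2 : ℕ) * (2 * ⌈480 * l⌉₊ + 1) :=
      mod_cast (rank_vdvT_le_card Y b).trans hcard
    _ ≤ 1500 * Real.log n * l := mul_ceil_add_one_le hl hR2
end

section
/- There is an absolute constant C > 0 such that for every integer n ≥ 2 and every ε ∈ (0, 1/2), the following holds: if H ∈ ℝ^{n×n} is a positive semidefinite Hankel matrix of the form H = V_X D_X V_X^T for a finite set X ⊂ ℝ with |x| > 1 for all x ∈ X and positive weights (a_x)_{x∈X}, then there exists a Hankel matrix Ĥ ∈ ℝ^{n×n} of rank at most C·(ln n)·ln(1/ε) with ‖H − Ĥ‖₂ ≤ ε‖H‖₂ and ‖H − Ĥ‖_F ≤ ε‖H‖_F. -/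
open scoped BigOperators

open scoped Classical

/-!
Write a node in `(0, 1]` as `y = e^{-t}`. On a bucket `T ≤ t ≤ 3T/2`, Taylor expansion around the
centre approximates `k ↦ e^{-tk}` by an exponential times a polynomial in `k` of degree
`O(log (1/ε))`, with error `ε e^{-tk/2}`. These sequences form a shift-invariant space, so the
Hankel matrices built from them have rank at most its dimension, and `O(log n)` buckets suffice:
on `t ≲ 1/n` expand around `0`, while for `y ≤ 1/4` truncating the sequence is enough. Summed
against the weights, the error matrix is dominated entrywise by `ε H(⌊i/2⌋, ⌊j/2⌋)`, whose norm is
at most `2ε ‖H‖` since each index is repeated at most twice.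

Nodes `y > 1` reduce to `y⁻¹` by reversing the order of the rows and columns, and negative nodes to
positive ones by conjugating with `diag(1, -1, 1, …)`. The pieces recombine because all of them
are positive semidefinite, hence have smaller norm than their sum.
-/

open scoped Finset

section MatrixNorms

variable {m : Type*} [Fintype m] [DecidableEq m]

open scoped Matrix.Norms.L2Operator in
/-- Seminorms on square matrices for which comparing two matrices entrywise, or comparing two
positive semidefinite matrices in the Loewner order, compares their norms, and for which
multiplication by `A` costs at most the spectral norm `‖A‖`. The spectral and the Frobenius norm
are treated simultaneously through this notion. -/
structure IsMonotoneIdealNorm (N : Seminorm ℝ (Matrix m m ℝ)) : Prop where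
  map_transpose : ∀ A, N A.transpose = N A
  map_mul_le : ∀ A B, N (A * B) ≤ ‖A‖ * N B
  le_of_abs_le : ∀ {A B : Matrix m m ℝ}, (∀ i j, |A i j| ≤ B i j) → N A ≤ N B
  le_add_of_posSemidef : ∀ {A P : Matrix m m ℝ}, A.PosSemidef → P.PosSemidef → N A ≤ N (A + P)

section Spectral

open scoped Matrix.Norms.L2Operator
open WithLp

variable (m) in
/-- The spectral norm as a seminorm, so that it can be an instance of `IsMonotoneIdealNorm`. -/
noncomputable def spectralSeminorm : Seminorm ℝ (Matrix m m ℝ) := normSeminorm ℝ (Matrix m m ℝ)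

lemma l2_opNorm_le_of_forall_mulVec_le {A : Matrix m m ℝ} {c : ℝ} (hc : 0 ≤ c)
    (h : ∀ x : m → ℝ, ‖toLp 2 (A.mulVec x)‖ ≤ c * ‖toLp 2 x‖) : ‖A‖ ≤ c :=
  ContinuousLinearMap.opNorm_le_bound _ hc fun x => h (ofLp x)

lemma norm_toLp_mulVec_le (A : Matrix m m ℝ) (x : m → ℝ) :
    ‖toLp 2 (A.mulVec x)‖ ≤ ‖A‖ * ‖toLp 2 x‖ :=
  A.l2_opNorm_mulVec (toLp 2 x)

lemma l2_opNorm_le_of_abs_le {A B : Matrix m m ℝ} (h : ∀ i j, |A i j| ≤ B i j) : ‖A‖ ≤ ‖B‖ := by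
  refine l2_opNorm_le_of_forall_mulVec_le (norm_nonneg B) fun x => ?_
  have hentry (i : m) : |A.mulVec x i| ≤ B.mulVec (fun j => |x j|) i := calc
    |A.mulVec x i| ≤ ∑ j, |A i j * x j| := Finset.abs_sum_le_sum_abs _ _
    _ = ∑ j, |A i j| * |x j| := by simp only [abs_mul]
    _ ≤ ∑ j, B i j * |x j| := by gcongr with j; exact h i j
  calc ‖toLp 2 (A.mulVec x)‖
      ≤ ‖toLp 2 (B.mulVec fun j => |x j|)‖ := by
        simp only [EuclideanSpace.norm_eq, Real.norm_eq_abs]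
        exact Real.sqrt_le_sqrt <| Finset.sum_le_sum fun i _ =>
          pow_le_pow_left₀ (abs_nonneg _) ((hentry i).trans (le_abs_self _)) 2
    _ ≤ ‖B‖ * ‖toLp 2 fun j => |x j|‖ := norm_toLp_mulVec_le B _
    _ = ‖B‖ * ‖toLp 2 x‖ := by simp only [EuclideanSpace.norm_eq, Real.norm_eq_abs, abs_abs]

lemma dotProduct_mulVec_le_l2_opNorm (A : Matrix m m ℝ) (x : m → ℝ) :
    x ⬝ᵥ A.mulVec x ≤ ‖A‖ * ‖toLp 2 x‖ ^ 2 := calc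
  x ⬝ᵥ A.mulVec x = inner ℝ (toLp 2 x) (toLp 2 (A.mulVec x)) := by
    simp [PiLp.inner_apply, dotProduct, mul_comm]
  _ ≤ ‖toLp 2 x‖ * ‖toLp 2 (A.mulVec x)‖ := real_inner_le_norm _ _
  _ ≤ ‖toLp 2 x‖ * (‖A‖ * ‖toLp 2 x‖) := by gcongr; exact norm_toLp_mulVec_le A x
  _ = ‖A‖ * ‖toLp 2 x‖ ^ 2 := by ring

open scoped MatrixOrder in
lemma l2_opNorm_le_add_of_posSemidef {A P : Matrix m m ℝ} (hA : A.PosSemidef)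
    (hP : P.PosSemidef) : ‖A‖ ≤ ‖A + P‖ := by
  obtain ⟨C, rfl⟩ := CStarAlgebra.nonneg_iff_eq_star_mul_self.mp hA.nonneg
  have hC : ‖C‖ ≤ √‖star C * C + P‖ := by
    refine l2_opNorm_le_of_forall_mulVec_le (Real.sqrt_nonneg _) fun x => ?_
    have hnorm : ‖toLp 2 (C.mulVec x)‖ ^ 2 = x ⬝ᵥ (star C * C).mulVec x := by
      rw [Matrix.star_eq_conjTranspose, Matrix.conjTranspose_eq_transpose_of_trivial,
        ← Matrix.mulVec_mulVec, Matrix.dotProduct_mulVec, Matrix.vecMul_transpose]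
      simp only [EuclideanSpace.norm_sq_eq, Real.norm_eq_abs, sq_abs, dotProduct, ← sq]
    refine abs_le_of_sq_le_sq' ?_ (by positivity) |>.2
    calc ‖toLp 2 (C.mulVec x)‖ ^ 2
        ≤ x ⬝ᵥ (star C * C + P).mulVec x := by
          rw [hnorm, Matrix.add_mulVec, dotProduct_add]
          exact le_add_of_nonneg_right (hP.dotProduct_mulVec_nonneg x)
      _ ≤ ‖star C * C + P‖ * ‖toLp 2 x‖ ^ 2 := dotProduct_mulVec_le_l2_opNorm _ x
      _ = (√‖star C * C + P‖ * ‖toLp 2 x‖) ^ 2 := by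
          rw [mul_pow, Real.sq_sqrt (norm_nonneg _)]
  calc ‖star C * C‖ = ‖C‖ ^ 2 := by rw [CStarRing.norm_star_mul_self, sq]
    _ ≤ √‖star C * C + P‖ ^ 2 := by gcongr
    _ = ‖star C * C + P‖ := Real.sq_sqrt (norm_nonneg _)

lemma isMonotoneIdealNorm_spectralSeminorm : IsMonotoneIdealNorm (spectralSeminorm m) where
  map_transpose A := by
    simpa only [Matrix.conjTranspose_eq_transpose_of_trivial] using! A.l2_opNorm_conjTranspose
  map_mul_le A B := Matrix.l2_opNorm_mul A B
  le_of_abs_le := l2_opNorm_le_of_abs_le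
  le_add_of_posSemidef := l2_opNorm_le_add_of_posSemidef

lemma specNorm_eq_spectralSeminorm {n : ℕ} (A : Matrix (Fin n) (Fin n) ℝ) :
    specNorm A = spectralSeminorm (Fin n) A := by
  have heucl (x : Fin n → ℝ) : euclNorm x = ‖toLp 2 x‖ := by
    simp [euclNorm, EuclideanSpace.norm_eq]
  rw [specNorm, ← sSup_range]
  refine Eq.trans (congrArg sSup ?_)
    (Matrix.toEuclideanCLM (𝕜 := ℝ) A).sSup_unitClosedBall_eq_norm
  ext c
  simp only [heucl, Set.mem_range, Subtype.exists, exists_prop, Set.mem_image,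
    mem_closedBall_zero_iff]
  exact ⟨fun ⟨x, hx, hc⟩ => ⟨toLp 2 x, hx, hc⟩, fun ⟨x, hx, hc⟩ => ⟨ofLp x, hx, hc⟩⟩

end Spectral

section Frobenius

open scoped Matrix.Norms.Frobenius

variable (m) in
/-- The Frobenius norm as a seminorm, so that it can be an instance of `IsMonotoneIdealNorm`. -/
noncomputable def frobeniusSeminorm : Seminorm ℝ (Matrix m m ℝ) := normSeminorm ℝ (Matrix m m ℝ)

omit [DecidableEq m] in
lemma frobeniusSeminorm_eq_sqrt (A : Matrix m m ℝ) :
    frobeniusSeminorm m A = √(∑ i, ∑ j, A i j ^ 2) := by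
  refine (Matrix.frobenius_norm_def A).trans ?_
  simp [Real.sqrt_eq_rpow]

lemma froNorm_eq_frobeniusSeminorm {n : ℕ} (A : Matrix (Fin n) (Fin n) ℝ) :
    froNorm A = frobeniusSeminorm (Fin n) A :=
  (frobeniusSeminorm_eq_sqrt A).symm

end Frobenius

section FrobeniusMonotone

open scoped Matrix.Norms.L2Operator

lemma frobeniusSeminorm_mul_le (A B : Matrix m m ℝ) :
    frobeniusSeminorm m (A * B) ≤ ‖A‖ * frobeniusSeminorm m B := by
  have hcol (j : m) : ∑ i, (A * B) i j ^ 2 ≤ ‖A‖ ^ 2 * ∑ i, B i j ^ 2 := by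
    have := pow_le_pow_left₀ (norm_nonneg _) (norm_toLp_mulVec_le A (B.col j)) 2
    rw [mul_pow] at this
    simpa only [EuclideanSpace.norm_sq_eq, Real.norm_eq_abs, sq_abs] using! this
  simp only [frobeniusSeminorm_eq_sqrt]
  rw [← Real.sqrt_sq (norm_nonneg A), ← Real.sqrt_mul (sq_nonneg _)]
  refine Real.sqrt_le_sqrt ?_
  rw [Finset.sum_comm, Finset.sum_comm (f := fun i j => B i j ^ 2), Finset.mul_sum]
  exact Finset.sum_le_sum fun j _ => hcol j

omit [DecidableEq m] in
lemma sum_mul_nonneg_of_posSemidef {A P : Matrix m m ℝ} (hA : A.PosSemidef)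
    (hP : P.PosSemidef) : 0 ≤ ∑ i, ∑ j, A i j * P i j := by
  simpa [dotProduct, Matrix.mulVec] using (hA.hadamard hP).dotProduct_mulVec_nonneg 1

lemma isMonotoneIdealNorm_frobeniusSeminorm : IsMonotoneIdealNorm (frobeniusSeminorm m) where
  map_transpose A := by
    simp only [frobeniusSeminorm_eq_sqrt, Matrix.transpose_apply]
    rw [Finset.sum_comm]
  map_mul_le := frobeniusSeminorm_mul_le
  le_of_abs_le {A B} h := by
    simp only [frobeniusSeminorm_eq_sqrt]
    refine Real.sqrt_le_sqrt (Finset.sum_le_sum fun i _ => Finset.sum_le_sum fun j _ => ?_)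
    exact sq_le_sq' (neg_le_of_abs_le (h i j)) (le_of_abs_le (h i j))
  le_add_of_posSemidef {A P} hA hP := by
    simp only [frobeniusSeminorm_eq_sqrt]
    refine Real.sqrt_le_sqrt ?_
    have hcross := sum_mul_nonneg_of_posSemidef hA hP
    have hP2 : 0 ≤ ∑ i, ∑ j, P i j ^ 2 := by positivity
    simp only [Matrix.add_apply, add_sq, mul_assoc, Finset.sum_add_distrib, ← Finset.mul_sum]
    linarith

end FrobeniusMonotone

namespace IsMonotoneIdealNorm

open scoped Matrix.Norms.L2Operator

variable {N : Seminorm ℝ (Matrix m m ℝ)} (hN : IsMonotoneIdealNorm N)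
include hN

lemma map_mul_mul_transpose_le (U A : Matrix m m ℝ) :
    N (U * A * U.transpose) ≤ ‖U‖ ^ 2 * N A := calc
  N (U * A * U.transpose) = N (U * (U * A).transpose) := by
    rw [← hN.map_transpose, Matrix.transpose_mul, Matrix.transpose_transpose]
  _ ≤ ‖U‖ * N (U * A).transpose := hN.map_mul_le _ _
  _ = ‖U‖ * N (U * A) := by rw [hN.map_transpose]
  _ ≤ ‖U‖ * (‖U‖ * N A) := by gcongr; exact hN.map_mul_le _ _
  _ = ‖U‖ ^ 2 * N A := by ring

lemma map_submatrix_le (A : Matrix m m ℝ) {e : m → m} {k : ℕ}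
    (he : ∀ j, #{i | e i = j} ≤ k) : N (A.submatrix e e) ≤ k * N A := by
  set U : Matrix m m ℝ := Matrix.of fun i j => if e i = j then 1 else 0 with hU
  have hUA : A.submatrix e e = U * A * U.transpose := by
    ext i j
    simp [hU, Matrix.mul_apply]
  have hUk : ‖U‖ ≤ √k := by
    refine l2_opNorm_le_of_forall_mulVec_le (Real.sqrt_nonneg _) fun x => ?_
    rw [EuclideanSpace.norm_eq, EuclideanSpace.norm_eq, ← Real.sqrt_mul (Nat.cast_nonneg k)]
    refine Real.sqrt_le_sqrt ?_
    calc ∑ i, ‖U.mulVec x i‖ ^ 2 = ∑ i, x (e i) ^ 2 := by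
          simp [hU, Matrix.mulVec, dotProduct]
      _ = ∑ j, (#{i | e i = j} : ℝ) * x j ^ 2 := by
          rw [← Finset.sum_fiberwise Finset.univ e fun i => x (e i) ^ 2]
          refine Finset.sum_congr rfl fun j _ => ?_
          rw [Finset.sum_congr rfl fun i hi => by rw [(Finset.mem_filter.mp hi).2],
            Finset.sum_const, nsmul_eq_mul]
      _ ≤ ∑ j, (k : ℝ) * x j ^ 2 := by
          gcongr with j
          exact_mod_cast he j
      _ = k * ∑ j, ‖x j‖ ^ 2 := by simp [Finset.mul_sum]
  calc N (A.submatrix e e) ≤ ‖U‖ ^ 2 * N A := hUA ▸ hN.map_mul_mul_transpose_le U A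
    _ ≤ √k ^ 2 * N A := by gcongr
    _ = k * N A := by rw [Real.sq_sqrt (Nat.cast_nonneg k)]

lemma map_submatrix_equiv (A : Matrix m m ℝ) (e : m ≃ m) : N (A.submatrix e e) = N A := by
  have hle (B : Matrix m m ℝ) (e : m ≃ m) : N (B.submatrix e e) ≤ N B := by
    simpa using hN.map_submatrix_le B (k := 1) fun j =>
      Finset.card_le_one.mpr (by simp [← Equiv.eq_symm_apply])
  refine (hle A e).antisymm ?_
  simpa using hle (A.submatrix e e) e.symm

lemma map_diagonal_mul_mul_diagonal (A : Matrix m m ℝ) {d : m → ℝ} (hd : ∀ i, d i * d i = 1) :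
    N (Matrix.diagonal d * A * Matrix.diagonal d) = N A := by
  set D := Matrix.diagonal d
  have hDD : D * D = 1 := by simp [D, hd]
  have hnorm : ‖D‖ ≤ 1 := by
    rw [Matrix.l2_opNorm_diagonal]
    refine (pi_norm_le_iff_of_nonneg zero_le_one).mpr fun i => ?_
    exact abs_le_one_iff_mul_self_le_one.mpr (hd i).le
  have hle (B : Matrix m m ℝ) : N (D * B * D) ≤ N B := calc
    N (D * B * D) ≤ ‖D‖ ^ 2 * N B := by
      simpa only [D, Matrix.diagonal_transpose] using hN.map_mul_mul_transpose_le D B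
    _ ≤ 1 ^ 2 * N B := by gcongr
    _ = N B := by ring
  refine (hle A).antisymm ?_
  calc N A = N (D * D * A * (D * D)) := by rw [hDD, one_mul, mul_one]
    _ = N (D * (D * A * D) * D) := by simp only [mul_assoc]
    _ ≤ N (D * A * D) := hle _

end IsMonotoneIdealNorm

end MatrixNorms

section Hankel

open Module Polynomial

/-- The Hankel matrix with entries `f (i + j)`. -/
def hankel {α : Type*} (n : ℕ) (f : ℕ → α) : Matrix (Fin n) (Fin n) α :=
  Matrix.of fun i j => f (i + j)

lemma isHankel_hankel (n : ℕ) (f : ℕ → ℝ) : IsHankel (hankel n f) :=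
  fun _ _ _ _ h => congrArg f h

variable {K : Type*} [Field K]

variable (K) in
/-- The left shift `(f₀, f₁, …) ↦ (f₁, f₂, …)`. Its finite-dimensional invariant subspaces are the
sources of low-rank Hankel matrices. -/
def shift : End K (ℕ → K) := LinearMap.funLeft K K Nat.succ

lemma add_right_mem_of_mem_invtSubmodule {W : Submodule K (ℕ → K)}
    (hW : W ∈ (shift K).invtSubmodule) {f : ℕ → K} (hf : f ∈ W) (j : ℕ) :
    (fun k => f (k + j)) ∈ W := by
  induction j with
  | zero => exact hf
  | succ j ih =>
    have hshift : (fun k => f (k + 1 + j)) ∈ W := hW ih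
    simpa only [Nat.add_right_comm _ 1 j] using! hshift

lemma rank_hankel_le {W : Submodule K (ℕ → K)} [FiniteDimensional K W]
    (hW : W ∈ (shift K).invtSubmodule) {f : ℕ → K} (hf : f ∈ W) (n : ℕ) :
    (hankel n f).rank ≤ finrank K W := by
  let restrict : (ℕ → K) →ₗ[K] (Fin n → K) := LinearMap.funLeft K K Fin.val
  rw [Matrix.rank_eq_finrank_span_cols]
  calc finrank K (Submodule.span K (Set.range (hankel n f).col))
      ≤ finrank K (W.map restrict) := by
        refine Submodule.finrank_mono (Submodule.span_le.mpr ?_)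
        rintro _ ⟨j, rfl⟩
        exact ⟨_, add_right_mem_of_mem_invtSubmodule hW hf j, rfl⟩
    _ ≤ finrank K W := Submodule.finrank_map_le _ _

/-- The sequences vanishing from index `M` on, which approximate geometric sequences of small
ratio. -/
def finitelySupportedSeq (K : Type*) [Field K] (M : ℕ) : Submodule K (ℕ → K) where
  carrier := {f | ∀ k, M ≤ k → f k = 0}
  add_mem' hf hg k hk := by simp [hf k hk, hg k hk]
  zero_mem' _ _ := rfl
  smul_mem' c f hf k hk := by simp [hf k hk]

lemma finitelySupportedSeq_mem_invtSubmodule (M : ℕ) :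
    finitelySupportedSeq K M ∈ (shift K).invtSubmodule :=
  fun _ hf k hk => hf (k + 1) (by lia)

lemma injective_restrict_finitelySupportedSeq (M : ℕ) :
    Function.Injective
      ((LinearMap.funLeft K K (Fin.val : Fin M → ℕ)).domRestrict (finitelySupportedSeq K M)) := by
  intro f g hfg
  ext k
  by_cases hk : k < M
  · exact congrFun hfg ⟨k, hk⟩
  · rw [f.2 k (not_lt.mp hk), g.2 k (not_lt.mp hk)]

instance finiteDimensional_finitelySupportedSeq (M : ℕ) :
    FiniteDimensional K (finitelySupportedSeq K M) :=
  FiniteDimensional.of_injective _ (injective_restrict_finitelySupportedSeq M)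

lemma finrank_finitelySupportedSeq_le (M : ℕ) : finrank K (finitelySupportedSeq K M) ≤ M := by
  simpa using LinearMap.finrank_le_finrank_of_injective
    (injective_restrict_finitelySupportedSeq (K := K) M)

/-- The sequence `k ↦ p(k) q ^ k`, linearly in `p`. -/
noncomputable def polyMulPow (q : K) : K[X] →ₗ[K] (ℕ → K) :=
  LinearMap.pi fun k => q ^ k • Polynomial.leval (k : K)

lemma polyMulPow_apply (q : K) (p : K[X]) (k : ℕ) : polyMulPow q p k = q ^ k * p.eval (k : K) :=
  rfl

lemma shift_polyMulPow (q : K) (p : K[X]) :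
    shift K (polyMulPow q p) = polyMulPow q (q • taylor 1 p) := by
  ext k
  simp only [shift, LinearMap.funLeft_apply, polyMulPow_apply, eval_smul, taylor_eval, smul_eq_mul,
    Nat.succ_eq_add_one, Nat.cast_add, Nat.cast_one]
  ring

/-- The sequences `k ↦ p(k) q ^ k` with `p` a polynomial of degree less than `M`, which
approximate geometric sequences of ratio close to `q`. -/
noncomputable def polyMulPowSeq (q : K) (M : ℕ) : Submodule K (ℕ → K) :=
  (degreeLT K M).map (polyMulPow q)

lemma polyMulPowSeq_mem_invtSubmodule (q : K) (M : ℕ) :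
    polyMulPowSeq q M ∈ (shift K).invtSubmodule := by
  rintro _ ⟨p, hp, rfl⟩
  refine ⟨q • taylor 1 p, Submodule.smul_mem _ _ ?_, (shift_polyMulPow q p).symm⟩
  simpa only [SetLike.mem_coe, mem_degreeLT, degree_taylor] using hp

instance finiteDimensional_degreeLT (M : ℕ) : FiniteDimensional K (degreeLT K M) :=
  (degreeLTEquiv K M).symm.finiteDimensional

instance finiteDimensional_polyMulPowSeq (q : K) (M : ℕ) :
    FiniteDimensional K (polyMulPowSeq q M) :=
  inferInstanceAs (FiniteDimensional K ((degreeLT K M).map (polyMulPow q)))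

lemma finrank_polyMulPowSeq_le (q : K) (M : ℕ) : finrank K (polyMulPowSeq q M) ≤ M :=
  (Submodule.finrank_map_le _ _).trans_eq (by rw [(degreeLTEquiv K M).finrank_eq, finrank_fin_fun])

end Hankel

section ExponentialTail

open Finset

lemma exp_sub_sum_range_le_s14 {w ρ : ℝ} (hw : 0 ≤ w) (hρ : 1 ≤ ρ) (M : ℕ) :
    Real.exp w - ∑ m ∈ range M, w ^ m / m.factorial ≤ (ρ ^ M)⁻¹ * Real.exp (ρ * w) := by
  have hseries (x : ℝ) : HasSum (fun m : ℕ => x ^ m / m.factorial) (Real.exp x) := by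
    simpa only [Real.exp_eq_exp_ℝ] using NormedSpace.expSeries_div_hasSum_exp x
  have htail : HasSum (fun m => w ^ (m + M) / (m + M).factorial)
      (Real.exp w - ∑ m ∈ range M, w ^ m / m.factorial) :=
    (hasSum_nat_add_iff' M).mpr (hseries w)
  have hscaled : HasSum (fun m => (ρ ^ M)⁻¹ * ((ρ * w) ^ (m + M) / (m + M).factorial))
      ((ρ ^ M)⁻¹ * (Real.exp (ρ * w) - ∑ m ∈ range M, (ρ * w) ^ m / m.factorial)) :=
    ((hasSum_nat_add_iff' M).mpr (hseries (ρ * w))).mul_left _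
  have hterm (m : ℕ) : w ^ (m + M) / (m + M).factorial ≤
      (ρ ^ M)⁻¹ * ((ρ * w) ^ (m + M) / (m + M).factorial) := calc
    w ^ (m + M) / (m + M).factorial ≤ ρ ^ m * (w ^ (m + M) / (m + M).factorial) :=
      le_mul_of_one_le_left (by positivity) (one_le_pow₀ hρ)
    _ = (ρ ^ M)⁻¹ * ((ρ * w) ^ (m + M) / (m + M).factorial) := by
      rw [mul_pow, pow_add ρ]; field_simp
  calc Real.exp w - ∑ m ∈ range M, w ^ m / m.factorial
      ≤ (ρ ^ M)⁻¹ * (Real.exp (ρ * w) - ∑ m ∈ range M, (ρ * w) ^ m / m.factorial) :=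
        hasSum_le hterm htail hscaled
    _ ≤ (ρ ^ M)⁻¹ * Real.exp (ρ * w) := by
        gcongr
        exact sub_le_self _ (by positivity)

lemma abs_exp_sub_sum_range_le {ρ : ℝ} (hρ : 1 ≤ ρ) (w : ℝ) (M : ℕ) :
    |Real.exp w - ∑ m ∈ range M, w ^ m / m.factorial| ≤ (ρ ^ M)⁻¹ * Real.exp (ρ * |w|) := by
  refine le_trans ?_ (exp_sub_sum_range_le_s14 (abs_nonneg w) hρ M)
  have h := Complex.norm_exp_sub_sum_le_exp_norm_sub_sum w M
  rw [Complex.norm_real, Real.norm_eq_abs] at h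
  exact_mod_cast h

end ExponentialTail

section Approximability

open Module Polynomial

-- Expand `e^{-tk}` in Taylor series around `τ`. The tail bound `2^{-M} e^{2k|t-τ|}` is affordable
-- because the allowed error decays only like `e^{-tk/2}`.
lemma exists_mem_polyMulPowSeq_abs_sub_le {τ t : ℝ} (ht : 0 ≤ t) (M : ℕ) :
    ∃ f ∈ polyMulPowSeq (Real.exp (-τ)) M, ∀ k : ℕ, k * (2 * |t - τ| + t / 2 - τ) ≤ 1 →
      |Real.exp (-t) ^ k - f k| ≤ (1 / 2) ^ M * Real.exp 1 * Real.exp (-t) ^ (k / 2) := by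
  let p : ℝ[X] := ∑ m ∈ Finset.range M, C ((τ - t) ^ m / m.factorial) * X ^ m
  have hp : p ∈ degreeLT ℝ M := Submodule.sum_mem _ fun m hm => mem_degreeLT.mpr <|
    (degree_C_mul_X_pow_le m _).trans_lt (by exact_mod_cast Finset.mem_range.mp hm)
  refine ⟨_, ⟨p, hp, rfl⟩, fun k hk => ?_⟩
  have herr : Real.exp (-t) ^ k - polyMulPow (Real.exp (-τ)) p k = Real.exp (-(k * τ)) *
      (Real.exp (k * (τ - t)) - ∑ m ∈ Finset.range M, (k * (τ - t)) ^ m / m.factorial) := by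
    rw [mul_sub, ← Real.exp_add, polyMulPow_apply, ← Real.exp_nat_mul, ← Real.exp_nat_mul]
    simp only [p, eval_finsetSum, eval_mul, eval_C, eval_pow, eval_X, mul_pow]
    ring_nf
  have hhalf : Real.exp (-(k * t / 2)) ≤ Real.exp (-t) ^ (k / 2) := by
    rw [← Real.exp_nat_mul, Real.exp_le_exp]
    have : ((k / 2 : ℕ) : ℝ) * t ≤ k / 2 * t := by gcongr; exact Nat.cast_div_le
    linarith
  calc |Real.exp (-t) ^ k - polyMulPow (Real.exp (-τ)) p k|
      ≤ Real.exp (-(k * τ)) * ((2 ^ M)⁻¹ * Real.exp (2 * |k * (τ - t)|)) := by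
        rw [herr, abs_mul, Real.abs_exp]
        gcongr
        exact abs_exp_sub_sum_range_le one_le_two _ M
    _ = (1 / 2) ^ M * Real.exp (-(k * τ) + 2 * (k * |t - τ|)) := by
        rw [Real.exp_add, abs_mul, abs_sub_comm, Nat.abs_cast, one_div, inv_pow]
        ring
    _ ≤ (1 / 2) ^ M * Real.exp (1 + -(k * t / 2)) := by
        gcongr ?_ * Real.exp ?_
        linarith
    _ = (1 / 2) ^ M * Real.exp 1 * Real.exp (-(k * t / 2)) := by rw [Real.exp_add, mul_assoc]
    _ ≤ (1 / 2) ^ M * Real.exp 1 * Real.exp (-t) ^ (k / 2) := by gcongr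

/-- All geometric sequences `(yᵏ)` with `y ∈ S` can be approximated up to index `2n`, with error
`ε y ^ ⌊k/2⌋`, by members of one shift-invariant space of dimension at most `r`. The error is
allowed to decay at half the rate of the sequence because halving the index of a moment matrix at
most doubles its norm. -/
def GeomApproximable (n : ℕ) (ε : ℝ) (S : Set ℝ) (r : ℕ) : Prop :=
  ∃ W ∈ (shift ℝ).invtSubmodule, FiniteDimensional ℝ W ∧ finrank ℝ W ≤ r ∧
    ∀ y ∈ S, ∃ f ∈ W, ∀ k ≤ 2 * n, |y ^ k - f k| ≤ ε * y ^ (k / 2)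

namespace GeomApproximable

variable {n r s M B : ℕ} {ε : ℝ} {S T : Set ℝ}

lemma mono (h : GeomApproximable n ε S r) (hT : T ⊆ S) : GeomApproximable n ε T r :=
  let ⟨W, hW, hfin, hr, hS⟩ := h
  ⟨W, hW, hfin, hr, fun y hy => hS y (hT hy)⟩

lemma union (hS : GeomApproximable n ε S r) (hT : GeomApproximable n ε T s) :
    GeomApproximable n ε (S ∪ T) (r + s) := by
  obtain ⟨V, hV, _, hr, happS⟩ := hS
  obtain ⟨W, hW, _, hs, happT⟩ := hT
  refine ⟨V ⊔ W, Sublattice.sup_mem hV hW, inferInstance,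
    (Submodule.finrank_add_le_finrank_add_finrank V W).trans (add_le_add hr hs), ?_⟩
  rintro y (hy | hy)
  · obtain ⟨f, hf, herr⟩ := happS y hy
    exact ⟨f, Submodule.mem_sup_left hf, herr⟩
  · obtain ⟨f, hf, herr⟩ := happT y hy
    exact ⟨f, Submodule.mem_sup_right hf, herr⟩

lemma Icc_zero_quarter (hM : (1 / 2 : ℝ) ^ M ≤ ε) :
    GeomApproximable n ε (Set.Icc 0 (1 / 4)) M := by
  refine ⟨finitelySupportedSeq ℝ M, finitelySupportedSeq_mem_invtSubmodule M, inferInstance,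
    finrank_finitelySupportedSeq_le M, ?_⟩
  rintro y ⟨hy0, hy⟩
  refine ⟨fun k => if k < M then y ^ k else 0, fun k hk => if_neg hk.not_gt, fun k _ => ?_⟩
  have hε : 0 ≤ ε := le_trans (by positivity) hM
  rcases lt_or_ge k M with hk | hk
  · simp only [if_pos hk, sub_self, abs_zero]
    positivity
  · simp only [if_neg hk.not_gt, sub_zero, abs_of_nonneg (pow_nonneg hy0 k)]
    calc y ^ k = y ^ (k - k / 2) * y ^ (k / 2) := by rw [← pow_add]; congr 1; lia
      _ ≤ (1 / 4) ^ (k - k / 2) * y ^ (k / 2) := by gcongr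
      _ = (1 / 2) ^ (2 * (k - k / 2)) * y ^ (k / 2) := by rw [pow_mul]; norm_num
      _ ≤ (1 / 2) ^ M * y ^ (k / 2) := by
          gcongr ?_ * _
          exact pow_le_pow_of_le_one (by norm_num) (by norm_num) (by lia)
      _ ≤ ε * y ^ (k / 2) := by gcongr

lemma image_exp_neg {τ : ℝ} (hM : (1 / 2 : ℝ) ^ M * Real.exp 1 ≤ ε) (hS0 : ∀ t ∈ S, 0 ≤ t)
    (hS : ∀ t ∈ S, ∀ k : ℕ, k ≤ 2 * n → k * (2 * |t - τ| + t / 2 - τ) ≤ 1) :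
    GeomApproximable n ε ((fun t => Real.exp (-t)) '' S) M := by
  refine ⟨polyMulPowSeq (Real.exp (-τ)) M, polyMulPowSeq_mem_invtSubmodule _ M, inferInstance,
    finrank_polyMulPowSeq_le _ M, ?_⟩
  rintro _ ⟨t, ht, rfl⟩
  obtain ⟨f, hf, herr⟩ := exists_mem_polyMulPowSeq_abs_sub_le (τ := τ) (hS0 t ht) M
  refine ⟨f, hf, fun k hk => (herr k (hS t ht k hk)).trans ?_⟩
  gcongr

lemma image_exp_neg_Icc_mul {T : ℝ} (hM : (1 / 2 : ℝ) ^ M * Real.exp 1 ≤ ε) (hT : 0 ≤ T) :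
    GeomApproximable n ε ((fun t => Real.exp (-t)) '' Set.Icc T (3 / 2 * T)) M := by
  refine image_exp_neg (τ := 5 / 4 * T) hM (fun t ht => hT.trans ht.1) ?_
  rintro t ⟨hTt, htT⟩ k -
  have hdist : |t - 5 / 4 * T| ≤ T / 4 := abs_le.mpr ⟨by linarith, by linarith⟩
  exact (mul_nonpos_of_nonneg_of_nonpos (Nat.cast_nonneg k) (by linarith)).trans zero_le_one

lemma image_exp_neg_Icc_zero (hn : 0 < n) (hM : (1 / 2 : ℝ) ^ M * Real.exp 1 ≤ ε) (B : ℕ) :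
    GeomApproximable n ε
      ((fun t => Real.exp (-t)) '' Set.Icc 0 ((3 / 2) ^ B * (1 / (5 * n)))) ((B + 1) * M) := by
  induction B with
  | zero =>
    rw [zero_add, one_mul, pow_zero, one_mul]
    refine image_exp_neg (τ := 0) hM (fun t ht => ht.1) ?_
    rintro t ⟨ht0, ht⟩ k hk
    have hkt : (k : ℝ) * t ≤ (2 * n : ℕ) * (1 / (5 * n)) := by gcongr
    have hconst : ((2 * n : ℕ) : ℝ) * (1 / (5 * n)) = 2 / 5 := by push_cast; field_simp
    simp only [sub_zero, abs_of_nonneg ht0]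
    linarith
  | succ B ih =>
    rw [pow_succ', mul_assoc, add_one_mul (B + 1) M]
    have hT : 0 ≤ (3 / 2 : ℝ) ^ B * (1 / (5 * n)) := by positivity
    refine (ih.union (image_exp_neg_Icc_mul hM hT)).mono ?_
    rw [← Set.image_union]
    exact Set.image_mono Set.Icc_subset_Icc_union_Icc

lemma Icc_zero_one (hn : 0 < n) (hM : (1 / 2 : ℝ) ^ M * Real.exp 1 ≤ ε)
    (hB : 10 * (n : ℝ) ≤ (3 / 2) ^ B) : GeomApproximable n ε (Set.Icc 0 1) ((B + 2) * M) := by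
  have hM' : (1 / 2 : ℝ) ^ M ≤ ε :=
    (le_mul_of_one_le_right (by positivity) (Real.one_le_exp zero_le_one)).trans hM
  rw [show (B + 2) * M = M + (B + 1) * M by ring]
  refine ((Icc_zero_quarter hM').union (image_exp_neg_Icc_zero hn hM B)).mono ?_
  rintro y ⟨hy0, hy1⟩
  rcases le_total y (1 / 4) with hy | hy
  · exact Or.inl ⟨hy0, hy⟩
  · have hypos : 0 < y := by linarith
    refine Or.inr ⟨-Real.log y, ⟨neg_nonneg.mpr (Real.log_nonpos hy0 hy1), ?_⟩, ?_⟩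
    · calc -Real.log y ≤ -Real.log (1 / 4) := by gcongr
        _ = 2 * Real.log 2 := by
          rw [one_div, Real.log_inv, show (4 : ℝ) = 2 ^ 2 by norm_num, Real.log_pow]; norm_num
        _ ≤ 10 * n * (1 / (5 * n)) := by field_simp; linarith [Real.log_two_lt_d9]
        _ ≤ (3 / 2) ^ B * (1 / (5 * n)) := by gcongr
    · simp only [neg_neg, Real.exp_log hypos]

end GeomApproximable

end Approximability

section LowRankApproximation

lemma matrix_rank_add_le {m n K : Type*} [Fintype n] [Field K] (A B : Matrix m n K) :
    (A + B).rank ≤ A.rank + B.rank := by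
  have hrange : (A + B).mulVecLin.range ≤ A.mulVecLin.range ⊔ B.mulVecLin.range := by
    rw [Matrix.mulVecLin_add]
    exact LinearMap.range_add_le _ _
  exact (Submodule.finrank_mono hrange).trans (Submodule.finrank_add_le_finrank_add_finrank _ _)

/-- Some Hankel matrix of rank at most `r` approximates `A` with relative error `δ` in every
monotone ideal norm simultaneously. -/
def LowRankHankelApprox {n : ℕ} (A : Matrix (Fin n) (Fin n) ℝ) (r : ℕ) (δ : ℝ) : Prop :=
  ∃ B, IsHankel B ∧ B.rank ≤ r ∧
    ∀ N : Seminorm ℝ (Matrix (Fin n) (Fin n) ℝ), IsMonotoneIdealNorm N → N (A - B) ≤ δ * N A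

namespace LowRankHankelApprox

variable {n r r' : ℕ} {A A' : Matrix (Fin n) (Fin n) ℝ} {δ δ' : ℝ}

lemma add (h : LowRankHankelApprox A r δ) (h' : LowRankHankelApprox A' r' δ')
    (hA : A.PosSemidef) (hA' : A'.PosSemidef) (hδ : 0 ≤ δ) (hδ' : 0 ≤ δ') :
    LowRankHankelApprox (A + A') (r + r') (δ + δ') := by
  obtain ⟨B, hB, hr, herr⟩ := h
  obtain ⟨B', hB', hr', herr'⟩ := h'
  refine ⟨B + B', fun i j k l hij => congrArg₂ (· + ·) (hB i j k l hij) (hB' i j k l hij),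
    (matrix_rank_add_le B B').trans (add_le_add hr hr'), fun N hN => ?_⟩
  calc N (A + A' - (B + B')) = N ((A - B) + (A' - B')) := by rw [add_sub_add_comm]
    _ ≤ N (A - B) + N (A' - B') := map_add_le_add N _ _
    _ ≤ δ * N A + δ' * N A' := add_le_add (herr N hN) (herr' N hN)
    _ ≤ δ * N (A + A') + δ' * N (A + A') := by
        gcongr
        · exact hN.le_add_of_posSemidef hA hA'
        · rw [add_comm]
          exact hN.le_add_of_posSemidef hA' hA
    _ = (δ + δ') * N (A + A') := by ring

lemma submatrix_rev (h : LowRankHankelApprox A r δ) :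
    LowRankHankelApprox (A.submatrix Fin.revPerm Fin.revPerm) r δ := by
  obtain ⟨B, hB, hr, herr⟩ := h
  refine ⟨B.submatrix Fin.revPerm Fin.revPerm, fun i j k l hij => hB _ _ _ _ ?_,
    (B.rank_submatrix _ _).trans_le hr, fun N hN => ?_⟩
  · simp only [Fin.revPerm_apply, Fin.val_rev]
    lia
  · rw [← Pi.sub_apply, ← Pi.sub_apply, ← Matrix.submatrix_sub, hN.map_submatrix_equiv,
      hN.map_submatrix_equiv]
    exact herr N hN

lemma alternating_mul_mul_alternating (h : LowRankHankelApprox A r δ) :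
    LowRankHankelApprox (Matrix.diagonal (fun i : Fin n => (-1) ^ (i : ℕ)) * A *
      Matrix.diagonal fun i : Fin n => (-1) ^ (i : ℕ)) r δ := by
  obtain ⟨B, hB, hr, herr⟩ := h
  have hsign (i : Fin n) : (-1 : ℝ) ^ (i : ℕ) * (-1) ^ (i : ℕ) = 1 := by
    rw [← mul_pow, neg_one_mul, neg_neg, one_pow]
  set D := Matrix.diagonal fun i : Fin n => (-1 : ℝ) ^ (i : ℕ) with hD
  have hentry (i j : Fin n) : (D * B * D) i j = (-1) ^ (i + j : ℕ) * B i j := by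
    rw [hD, Matrix.mul_diagonal, Matrix.diagonal_mul, pow_add]
    ring
  refine ⟨D * B * D, fun i j k l hij => ?_, ?_, fun N hN => ?_⟩
  · rw [hentry, hentry, hij, hB i j k l hij]
  · exact (Matrix.rank_mul_le_left _ _).trans ((Matrix.rank_mul_le_right _ _).trans hr)
  · rw [← sub_mul, ← mul_sub, hN.map_diagonal_mul_mul_diagonal _ hsign,
      hN.map_diagonal_mul_mul_diagonal _ hsign]
    exact herr N hN

end LowRankHankelApprox

end LowRankApproximation

section MomentMatrix

variable {ι : Type*} {n r M B : ℕ} {c : ℝ} {s : Finset ι} {b y : ι → ℝ}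

/-- The Hankel moment matrix of the discrete measure with mass `b i` at the node `y i`, `i ∈ s`. -/
def momentMatrix (n : ℕ) (s : Finset ι) (b y : ι → ℝ) : Matrix (Fin n) (Fin n) ℝ :=
  hankel n fun k => ∑ i ∈ s, b i * y i ^ k

lemma vdvT_eq_momentMatrix (n : ℕ) (X : Finset ℝ) (a : ℝ → ℝ) :
    vdvT n X a = momentMatrix n X a id := by
  ext i j
  rw [vdvT, Matrix.mul_apply]
  simp only [vandermondeX, momentMatrix, hankel, Matrix.mul_diagonal, Matrix.transpose_apply,
    Matrix.of_apply, id_eq]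
  rw [← Finset.sum_coe_sort X fun x => a x * x ^ (i + j : ℕ)]
  refine Finset.sum_congr rfl fun x _ => ?_
  ring

lemma posSemidef_momentMatrix (n : ℕ) (hb : ∀ i ∈ s, 0 ≤ b i) :
    (momentMatrix n s b y).PosSemidef := by
  have hsum : momentMatrix n s b y =
      ∑ i ∈ s, b i • Matrix.vecMulVec (fun k : Fin n => y i ^ (k : ℕ))
        (star fun k : Fin n => y i ^ (k : ℕ)) := by
    ext k l
    simp [momentMatrix, hankel, Matrix.sum_apply, Matrix.vecMulVec_apply, pow_add]
  rw [hsum]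
  exact Matrix.posSemidef_sum s fun i hi => (Matrix.posSemidef_vecMulVec_self_star _).smul (hb i hi)

lemma momentMatrix_filter_add_filter_not (n : ℕ) (s : Finset ι) (b y : ι → ℝ) (p : ι → Prop)
    [DecidablePred p] :
    momentMatrix n {i ∈ s | p i} b y + momentMatrix n {i ∈ s | ¬p i} b y =
      momentMatrix n s b y := by
  ext k l
  exact Finset.sum_filter_add_sum_filter_not s p _

lemma submatrix_rev_momentMatrix_inv (hy : ∀ i ∈ s, y i ≠ 0) :
    (momentMatrix n s (fun i => b i * y i ^ (2 * (n - 1))) fun i => (y i)⁻¹).submatrix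
      Fin.revPerm Fin.revPerm = momentMatrix n s b y := by
  ext k l
  refine Finset.sum_congr rfl fun i hi => ?_
  have hexp : 2 * (n - 1) = (k + l : ℕ) + (k.rev + l.rev : ℕ) := by
    simp only [Fin.val_rev]
    lia
  simp only [hexp, pow_add _ (k + l : ℕ), inv_pow, mul_assoc, Fin.revPerm_apply]
  rw [mul_inv_cancel₀ (pow_ne_zero _ (hy i hi)), mul_one]

lemma alternating_mul_momentMatrix_mul_alternating (n : ℕ) (s : Finset ι) (b y : ι → ℝ) :
    Matrix.diagonal (fun i : Fin n => (-1) ^ (i : ℕ)) * momentMatrix n s b y *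
      Matrix.diagonal (fun i : Fin n => (-1) ^ (i : ℕ)) = momentMatrix n s b fun i => -y i := by
  ext k l
  rw [Matrix.mul_diagonal, Matrix.diagonal_mul]
  simp only [momentMatrix, hankel, Matrix.of_apply, Finset.mul_sum, Finset.sum_mul]
  refine Finset.sum_congr rfl fun i _ => ?_
  rw [neg_pow (y i), pow_add (-1 : ℝ)]
  ring

/-- The index map `i ↦ ⌊i/2⌋`, along which a moment matrix is compared with its error matrix. -/
def halve (i : Fin n) : Fin n := ⟨i / 2, (Nat.div_le_self _ _).trans_lt i.2⟩

lemma card_filter_halve_eq_le (j : Fin n) : #{i | halve i = j} ≤ 2 := by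
  refine (Finset.card_le_card_of_injOn (t := ({2 * (j : ℕ), 2 * (j : ℕ) + 1} : Finset ℕ))
    Fin.val (fun i hi => ?_) Fin.val_injective.injOn).trans Finset.card_le_two
  have hij : (i : ℕ) / 2 = j := congrArg Fin.val (Finset.mem_filter.mp hi).2
  simp only [Finset.coe_insert, Finset.coe_singleton, Set.mem_insert_iff, Set.mem_singleton_iff]
  lia

namespace LowRankHankelApprox

lemma momentMatrix_of_mem_Icc (happ : GeomApproximable n c (Set.Icc 0 1) r) (hc : 0 ≤ c)
    (hb : ∀ i ∈ s, 0 ≤ b i) (hy : ∀ i ∈ s, y i ∈ Set.Icc 0 1) :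
    LowRankHankelApprox (momentMatrix n s b y) r (2 * c) := by
  obtain ⟨W, hW, _, hr, happ⟩ := happ
  choose! f hfW herr using happ
  have hFW : ∑ i ∈ s, b i • f (y i) ∈ W :=
    Submodule.sum_mem _ fun i hi => Submodule.smul_mem _ _ (hfW _ (hy i hi))
  refine ⟨_, isHankel_hankel n _, (rank_hankel_le hW hFW n).trans hr, fun N hN => ?_⟩
  have hentry (k l : Fin n) : |(momentMatrix n s b y - hankel n (∑ i ∈ s, b i • f (y i))) k l| ≤
      (c • (momentMatrix n s b y).submatrix halve halve) k l := calc
    _ = |∑ i ∈ s, b i * (y i ^ (k + l : ℕ) - f (y i) (k + l))| := by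
      simp [momentMatrix, hankel, mul_sub]
    _ ≤ ∑ i ∈ s, |b i * (y i ^ (k + l : ℕ) - f (y i) (k + l))| := Finset.abs_sum_le_sum_abs _ _
    _ ≤ ∑ i ∈ s, c * (b i * y i ^ (k / 2 + l / 2 : ℕ)) := by
      refine Finset.sum_le_sum fun i hi => ?_
      rw [abs_mul, abs_of_nonneg (hb i hi), mul_left_comm]
      refine mul_le_mul_of_nonneg_left ((herr _ (hy i hi) _ (by lia)).trans ?_) (hb i hi)
      exact mul_le_mul_of_nonneg_left
        (pow_le_pow_of_le_one (hy i hi).1 (hy i hi).2 (by lia)) hc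
    _ = (c • (momentMatrix n s b y).submatrix halve halve) k l := by
      simp [momentMatrix, hankel, halve, Finset.mul_sum]
  calc N (momentMatrix n s b y - hankel n (∑ i ∈ s, b i • f (y i)))
      ≤ N (c • (momentMatrix n s b y).submatrix halve halve) := hN.le_of_abs_le hentry
    _ = c * N ((momentMatrix n s b y).submatrix halve halve) := by
        rw [map_smul_eq_mul, Real.norm_of_nonneg hc]
    _ ≤ c * ((2 : ℕ) * N (momentMatrix n s b y)) := by
        gcongr
        exact hN.map_submatrix_le _ card_filter_halve_eq_le
    _ = 2 * c * N (momentMatrix n s b y) := by push_cast; ring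

lemma momentMatrix_of_one_lt (happ : GeomApproximable n c (Set.Icc 0 1) r) (hc : 0 ≤ c)
    (hb : ∀ i ∈ s, 0 ≤ b i) (hy : ∀ i ∈ s, 1 < y i) :
    LowRankHankelApprox (momentMatrix n s b y) r (2 * c) := by
  have hypos (i : ι) (hi : i ∈ s) : 0 < y i := zero_lt_one.trans (hy i hi)
  rw [← submatrix_rev_momentMatrix_inv fun i hi => (hypos i hi).ne']
  refine (momentMatrix_of_mem_Icc happ hc (fun i hi => ?_) fun i hi => ?_).submatrix_rev
  · exact mul_nonneg (hb i hi) (pow_nonneg (hypos i hi).le _)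
  · exact ⟨inv_nonneg.mpr (hypos i hi).le, inv_le_one_of_one_le₀ (hy i hi).le⟩

lemma momentMatrix_of_filter {r' : ℕ} {δ δ' : ℝ} (hb : ∀ i ∈ s, 0 ≤ b i) (p : ι → Prop)
    [DecidablePred p] (hp : LowRankHankelApprox (momentMatrix n {i ∈ s | p i} b y) r δ)
    (hnp : LowRankHankelApprox (momentMatrix n {i ∈ s | ¬p i} b y) r' δ')
    (hδ : 0 ≤ δ) (hδ' : 0 ≤ δ') :
    LowRankHankelApprox (momentMatrix n s b y) (r + r') (δ + δ') := by
  rw [← momentMatrix_filter_add_filter_not n s b y p]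
  exact hp.add hnp (posSemidef_momentMatrix n fun i hi => hb i (Finset.mem_of_mem_filter i hi))
    (posSemidef_momentMatrix n fun i hi => hb i (Finset.mem_of_mem_filter i hi)) hδ hδ'

lemma momentMatrix_of_nonneg (happ : GeomApproximable n c (Set.Icc 0 1) r) (hc : 0 ≤ c)
    (hb : ∀ i ∈ s, 0 ≤ b i) (hy : ∀ i ∈ s, 0 ≤ y i) :
    LowRankHankelApprox (momentMatrix n s b y) (r + r) (2 * c + 2 * c) := by
  refine momentMatrix_of_filter hb (fun i => y i ≤ 1)
    (momentMatrix_of_mem_Icc happ hc ?_ ?_) (momentMatrix_of_one_lt happ hc ?_ ?_)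
    (by positivity) (by positivity) <;>
    intro i hi <;> obtain ⟨his, hi1⟩ := Finset.mem_filter.mp hi
  exacts [hb i his, ⟨hy i his, hi1⟩, hb i his, not_le.mp hi1]

lemma momentMatrix_of_geomApproximable (happ : GeomApproximable n c (Set.Icc 0 1) r) (hc : 0 ≤ c)
    (hb : ∀ i ∈ s, 0 ≤ b i) : LowRankHankelApprox (momentMatrix n s b y) (4 * r) (8 * c) := by
  have hneg : LowRankHankelApprox (momentMatrix n {i ∈ s | ¬0 ≤ y i} b y)
      (r + r) (2 * c + 2 * c) := by
    have hflip := momentMatrix_of_nonneg (s := {i ∈ s | ¬0 ≤ y i}) (y := fun i => -y i) happ hc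
      (fun i hi => hb i (Finset.mem_of_mem_filter i hi))
      (fun i hi => neg_nonneg.mpr (not_le.mp (Finset.mem_filter.mp hi).2).le)
    simpa only [alternating_mul_momentMatrix_mul_alternating, neg_neg] using
      hflip.alternating_mul_mul_alternating
  have hpos : LowRankHankelApprox (momentMatrix n {i ∈ s | 0 ≤ y i} b y)
      (r + r) (2 * c + 2 * c) :=
    momentMatrix_of_nonneg happ hc (fun i hi => hb i (Finset.mem_of_mem_filter i hi))
      fun i hi => (Finset.mem_filter.mp hi).2
  convert momentMatrix_of_filter hb (fun i => 0 ≤ y i) hpos hneg (by positivity) (by positivity)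
    using 1 <;> ring

end LowRankHankelApprox

end MomentMatrix

section Parameters

lemma one_le_logb_two {u : ℝ} (hu : 2 ≤ u) : 1 ≤ Real.logb 2 u := by
  rwa [Real.le_logb_iff_rpow_le one_lt_two (by linarith), Real.rpow_one]

lemma exists_two_pow_mul_le_two_pow {u : ℝ} (hu : 2 ≤ u) (j : ℕ) :
    ∃ M : ℕ, 2 ^ j * u ≤ 2 ^ M ∧ M ≤ (j + 2) * Real.logb 2 u := by
  have hlog := one_le_logb_two hu
  refine ⟨j + ⌈Real.logb 2 u⌉₊, ?_, ?_⟩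
  · rw [pow_add]
    gcongr
    rw [← Real.rpow_natCast, ← Real.logb_le_iff_le_rpow one_lt_two (by linarith)]
    exact Nat.le_ceil _
  · push_cast
    have hceil := Nat.ceil_lt_add_one (zero_le_one.trans hlog)
    have hj : (j : ℝ) ≤ j * Real.logb 2 u := le_mul_of_one_le_right j.cast_nonneg hlog
    linarith

lemma exists_degree_le_logb {ε : ℝ} (hε : 0 < ε) (hε' : ε < 1 / 2) :
    ∃ M : ℕ, (1 / 2) ^ M * Real.exp 1 ≤ ε / 8 ∧ M ≤ 7 * Real.logb 2 (1 / ε) := by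
  have hu : 2 ≤ 1 / ε := by rw [le_div_iff₀ hε]; linarith
  obtain ⟨M, hpow, hM⟩ := exists_two_pow_mul_le_two_pow hu 5
  refine ⟨M, ?_, hM.trans_eq (by norm_num)⟩
  have hexp : Real.exp 1 ≤ 4 := by linarith [Real.exp_one_lt_d9]
  have hpow' : 32 ≤ ε * 2 ^ M := by
    calc (32 : ℝ) = ε * (2 ^ 5 * (1 / ε)) := by field_simp; norm_num
      _ ≤ ε * 2 ^ M := by gcongr
  rw [one_div, inv_pow, inv_mul_le_iff₀ (by positivity)]
  linarith

lemma exists_bucket_count_le_logb {n : ℕ} (hn : 2 ≤ n) :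
    ∃ B : ℕ, 10 * (n : ℝ) ≤ (3 / 2) ^ B ∧ B + 2 ≤ 14 * Real.logb 2 n := by
  have hu : (2 : ℝ) ≤ n := by exact_mod_cast hn
  have hlog := one_le_logb_two hu
  obtain ⟨B, hpow, hB⟩ := exists_two_pow_mul_le_two_pow hu 4
  refine ⟨2 * B, ?_, ?_⟩
  · calc 10 * (n : ℝ) ≤ 2 ^ 4 * n := by linarith
      _ ≤ 2 ^ B := hpow
      _ ≤ ((3 / 2) ^ 2) ^ B := by gcongr; norm_num
      _ = (3 / 2) ^ (2 * B) := (pow_mul _ _ _).symm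
  · push_cast at hB ⊢
    linarith

end Parameters

theorem nodes_gt_one_low_rank_general :
    ∃ C : ℝ, 0 < C ∧
      ∀ (n : ℕ), 2 ≤ n → ∀ ε : ℝ, 0 < ε → ε < 1 / 2 →
        ∀ (X : Finset ℝ) (a : ℝ → ℝ), (∀ x ∈ X, 0 ≤ a x) →
          ∃ Hhat : Matrix (Fin n) (Fin n) ℝ, IsHankel Hhat ∧
            (Hhat.rank : ℝ) ≤ C * Real.log n * Real.log (1 / ε) ∧
            specNorm (vdvT n X a - Hhat) ≤ ε * specNorm (vdvT n X a) ∧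
            froNorm (vdvT n X a - Hhat) ≤ ε * froNorm (vdvT n X a) := by
  refine ⟨392 / Real.log 2 ^ 2, by positivity, fun n hn ε hε hε' X a ha => ?_⟩
  obtain ⟨M, hM, hMlog⟩ := exists_degree_le_logb hε hε'
  obtain ⟨B, hB, hBlog⟩ := exists_bucket_count_le_logb hn
  have happ : GeomApproximable n (ε / 8) (Set.Icc 0 1) ((B + 2) * M) :=
    .Icc_zero_one (by lia) hM hB
  obtain ⟨Hhat, hHankel, hrank, herr⟩ :=
    LowRankHankelApprox.momentMatrix_of_geomApproximable (y := id) happ (by positivity) ha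
  rw [mul_div_cancel₀ ε (by norm_num)] at herr
  rw [vdvT_eq_momentMatrix]
  refine ⟨Hhat, hHankel, ?_, ?_, ?_⟩
  · calc (Hhat.rank : ℝ) ≤ 4 * ((B + 2) * M) := by exact_mod_cast hrank
      _ ≤ 4 * ((14 * Real.logb 2 n) * (7 * Real.logb 2 (1 / ε))) := by
        gcongr 4 * ?_
        exact mul_le_mul hBlog hMlog (by positivity) (le_trans (by positivity) hBlog)
      _ = 392 / Real.log 2 ^ 2 * Real.log n * Real.log (1 / ε) := by
        simp only [Real.logb]
        ring
  · simpa only [specNorm_eq_spectralSeminorm] using herr _ isMonotoneIdealNorm_spectralSeminorm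
  · simpa only [froNorm_eq_frobeniusSeminorm] using herr _ isMonotoneIdealNorm_frobeniusSeminorm

/-- The existence result for PSD Hankel matrices `H = V_X D_X V_Xᵀ` whose
nodes all satisfy `|x| > 1`. -/
theorem nodes_gt_one_low_rank :
    ∃ C : ℝ, 0 < C ∧
      ∀ (n : ℕ), 2 ≤ n → ∀ ε : ℝ, 0 < ε → ε < 1 / 2 →
        ∀ (X : Finset ℝ) (a : ℝ → ℝ),
          (∀ x ∈ X, 1 < |x|) → (∀ x ∈ X, 0 < a x) →
          ∀ H : Matrix (Fin n) (Fin n) ℝ, H = vdvT n X a → H.PosSemidef → IsHankel H →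
            ∃ Hhat : Matrix (Fin n) (Fin n) ℝ, IsHankel Hhat ∧
              (Hhat.rank : ℝ) ≤ C * Real.log n * Real.log (1 / ε) ∧
              specNorm (H - Hhat) ≤ ε * specNorm H ∧
              froNorm (H - Hhat) ≤ ε * froNorm H := by
  obtain ⟨C, hC, happrox⟩ := nodes_gt_one_low_rank_general
  exact ⟨C, hC, fun n hn ε hε hε' X a _ ha H hH _ _ =>
    hH ▸ happrox n hn ε hε hε' X a fun x hx => (ha x hx).le⟩
end
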